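/- arXiv:2406.07223 — 3 statements merged into one kernel-verified Lean document; each statement's English description precedes it below -/
import Mathlib

section
/- Let k be a field of characteristic zero and X ⊂ P^{2n+1} a smooth cubic hypersurface over k. If X contains two skew n-planes defined over a quadratic extension of k, that are conjugate over k, then X is rational over k. -/
open MvPolynomial

/-- Dehomogenization of a polynomial in `m + 1` variables at the `i`-th variable:
substitute `x_i = 1` and renumber the remaining variables by `0, …, m - 1`. -/
noncomputable def dehom (k : Type) [Field k] (m : ℕ) (i : Fin (m + 1))
    (F : MvPolynomial (Fin (m + 1)) k) : MvPolynomial (Fin m) k :=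
  aeval (fun j : Fin (m + 1) =>
    if h : j = i then (1 : MvPolynomial (Fin m) k)
    else X ⟨if j.1 < i.1 then j.1 else j.1 - 1, by
      have hne : (j : ℕ) ≠ (i : ℕ) := fun hh => h (Fin.ext hh)
      have hj := j.isLt; have hi := i.isLt
      split <;> omega⟩) F

/-- A projective hypersurface `{F = 0} ⊂ P^m` is rational over `k`: for some standard
affine chart `{x_i = 1}` the fraction field of the corresponding affine coordinate ring
is `k`-isomorphic to `k(x₁, …, x_{m-1})`. -/
def IsRationalHypersurface (k : Type) [Field k] (m : ℕ)
    (F : MvPolynomial (Fin (m + 1)) k) : Prop :=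
  ∃ i : Fin (m + 1),
    Nonempty ((FractionRing (MvPolynomial (Fin m) k ⧸ Ideal.span {dehom k m i F}))
      ≃ₐ[k] FractionRing (MvPolynomial (Fin (m - 1)) k))

/-!
Put `K = k(δ)`, where `δ` is a root of `m = X² - tX + N`. Skewness lets one choose linear
coordinates over `k` in which `H₁ = {(c, δc)}`, with conjugate `H₂`. The line joining a point of
`H₁` to its conjugate is defined over `k`, and these lines, indexed by `c = p + δq` with `p` and `q`
over `k` (that is, by the Weil restriction of an `n`-plane), sweep out `P^{2n+1}`: through a general
point passes exactly one. Restricted to such a line with parameter `s`, the cubic form vanishes at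
both conjugate points, so it equals `m(s) (α s + β)`. The third intersection point `s = -β / α` is
rational over `k(p, q)`, and the `2n` affine coordinates of `(p, q)` become coordinates on `X`.
-/

universe u

section Smooth

variable {σ k : Type*}

theorem order_coe_le_totalDegree {R : Type*} [CommSemiring R] {f : MvPolynomial σ R}
    (hf : f ≠ 0) : (f : MvPowerSeries σ R).order ≤ f.totalDegree := by
  obtain ⟨s, hs⟩ := ne_zero_iff.mp hf
  calc (f : MvPowerSeries σ R).order ≤ s.degree := MvPowerSeries.order_le (by rwa [coeff_coe])
    _ ≤ f.totalDegree := by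
      rw [Finsupp.degree_apply]
      exact_mod_cast le_totalDegree (mem_support_iff.mpr hs)

theorem isUnit_of_dvd_of_isHomogeneous [Field k] {f g : MvPolynomial σ k} {d : ℕ}
    (hf : f.IsHomogeneous d) (hf0 : f ≠ 0) (hg : constantCoeff g ≠ 0) (hgf : g ∣ f) :
    IsUnit g := by
  obtain ⟨h, rfl⟩ := hgf
  have hg0 : g ≠ 0 := left_ne_zero_of_mul hf0
  have hh0 : h ≠ 0 := right_ne_zero_of_mul hf0
  have hdeg : g.totalDegree + h.totalDegree = d := by
    rw [← totalDegree_mul_of_isDomain hg0 hh0, hf.totalDegree hf0]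
  have horder_g : (g : MvPowerSeries σ k).order = 0 := by
    by_contra h0
    rw [← ne_eq, MvPowerSeries.order_ne_zero_iff_constCoeff_eq_zero] at h0
    exact hg h0
  have horder_h : (d : ℕ∞) ≤ (h : MvPowerSeries σ k).order := by
    rw [← zero_add (MvPowerSeries.order _), ← horder_g, ← MvPowerSeries.order_mul, ← coe_mul]
    refine MvPowerSeries.le_order fun s hs => ?_
    rw [coeff_coe]
    exact hf.coeff_eq_zero (by exact_mod_cast hs.ne)
  have : d ≤ h.totalDegree := by exact_mod_cast horder_h.trans (order_coe_le_totalDegree hh0)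
  exact isUnit_iff_totalDegree_of_isReduced.mpr ⟨isUnit_iff_ne_zero.mpr hg, by omega⟩

theorem card_le_height_ker_aeval_piecewise [DecidableEq σ] [Field k] (s : Finset σ) :
    (s.card : ℕ∞) ≤
      (RingHom.ker (aeval (s.piecewise 0 X) : MvPolynomial σ k →ₐ[k] MvPolynomial σ k)).height := by
  induction s using Finset.induction_on with
  | empty => simp
  | insert a s ha ih =>
    set φ : MvPolynomial σ k →ₐ[k] MvPolynomial σ k := aeval (s.piecewise 0 X)
    set ψ : MvPolynomial σ k →ₐ[k] MvPolynomial σ k := aeval ((insert a s).piecewise 0 X)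
    have hcomp : ψ.comp φ = ψ := by
      ext i : 1
      by_cases hi : i ∈ s <;> simp [φ, ψ, hi, Finset.piecewise]
    have hlt : RingHom.ker φ < RingHom.ker ψ := by
      refine SetLike.lt_iff_le_and_exists.mpr ⟨fun p hp => ?_, X a, ?_, ?_⟩
      · rw [RingHom.mem_ker] at hp ⊢
        rw [← hcomp, AlgHom.comp_apply, hp, map_zero]
      · simp [RingHom.mem_ker, ψ]
      · simp [RingHom.mem_ker, φ, ha]
    have := RingHom.ker_isPrime φ
    have := RingHom.ker_isPrime ψ
    rw [Finset.card_insert_of_notMem ha, Nat.cast_succ]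
    exact (add_le_add_left ih 1).trans (Ideal.height_add_one_le_of_lt_of_isPrime hlt)

theorem card_le_height_ker_constantCoeff [Fintype σ] [Field k] :
    (Fintype.card σ : ℕ∞) ≤
      (RingHom.ker (constantCoeff : MvPolynomial σ k →+* k)).height := by
  classical
  refine (card_le_height_ker_aeval_piecewise Finset.univ).trans
    (Ideal.height_mono fun p hp => ?_)
  rw [RingHom.mem_ker, Finset.piecewise_univ, aeval_zero] at hp
  exact (C_eq_zero (σ := σ)).mp hp

theorem exists_ne_zero_forall_aeval_eq_zero [Fintype σ] [Field k] (K : Type*) [Field K]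
    [Algebra k K] [IsAlgClosed K] {S : Finset (MvPolynomial σ k)} (hS : S.card < Fintype.card σ)
    (hS0 : ∀ g ∈ S, constantCoeff g = 0) :
    ∃ v : σ → K, v ≠ 0 ∧ ∀ g ∈ S, aeval v g = 0 := by
  let m₀ := RingHom.ker (constantCoeff : MvPolynomial σ k →+* k)
  have : m₀.IsPrime := RingHom.ker_isPrime _
  obtain ⟨p, hp, -⟩ := Ideal.exists_minimalPrimes_le (I := Ideal.span (S : Set _)) (J := m₀)
    (Ideal.span_le.mpr fun g hg => hS0 g hg)
  have : p.IsPrime := hp.1.1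
  have hpS : p.height ≤ S.card :=
    (Ideal.height_le_card_of_mem_minimalPrimes_span S.finite_toSet hp).trans
      (by rw [Set.ncard_coe_finset])
  have hne : ¬ m₀ ≤ p := fun hmp => by
    have hle : (Fintype.card σ : ℕ∞) ≤ S.card :=
      (card_le_height_ker_constantCoeff.trans (Ideal.height_mono hmp)).trans hpS
    exact hS.not_ge (by exact_mod_cast hle)
  obtain ⟨v, hv, hv0⟩ : ∃ v ∈ zeroLocus K p, v ≠ 0 := by
    by_contra! hzero
    refine hne fun q hq => ?_
    rw [← IsPrime.vanishingIdeal_zeroLocus (K := K) p, mem_vanishingIdeal_iff]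
    intro v hv
    rw [hzero v hv, aeval_zero, RingHom.mem_ker.mp hq, map_zero]
  exact ⟨v, hv0, fun g hg => hv g (hp.1.2 (Ideal.subset_span hg))⟩

theorem irreducible_of_smooth [Fintype σ] (hσ : 3 ≤ Fintype.card σ) [Field k]
    (K : Type*) [Field K] [Algebra k K] [IsAlgClosed K] {F : MvPolynomial σ k} {d : ℕ}
    (hd : d ≠ 0) (hF : F.IsHomogeneous d)
    (hsmooth : ∀ v : σ → K, v ≠ 0 → aeval v F = 0 → ∃ i, aeval v (pderiv i F) ≠ 0) :
    Irreducible F := by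
  classical
  have : Nonempty σ := Fintype.card_pos_iff.mp (by omega)
  have hF0 : F ≠ 0 := by
    rintro rfl
    obtain ⟨i, hi⟩ := hsmooth 1 one_ne_zero (map_zero _)
    exact hi (by rw [map_zero, map_zero])
  have hconst : constantCoeff F = 0 := hF.coeff_eq_zero (by simpa using hd.symm)
  refine ⟨fun hu => (hu.map constantCoeff).ne_zero hconst, fun g h hgh => ?_⟩
  by_contra! hgh'
  have hg : constantCoeff g = 0 := by
    by_contra hg
    exact hgh'.1 (isUnit_of_dvd_of_isHomogeneous hF hF0 hg (hgh ▸ dvd_mul_right g h))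
  have hh : constantCoeff h = 0 := by
    by_contra hh
    exact hgh'.2 (isUnit_of_dvd_of_isHomogeneous hF hF0 hh (hgh ▸ dvd_mul_left h g))
  obtain ⟨v, hv, hgh0⟩ := exists_ne_zero_forall_aeval_eq_zero K (S := {g, h})
    (Finset.card_le_two.trans_lt hσ) (by simp [hg, hh])
  have hgv : aeval v g = 0 := hgh0 g (by simp)
  have hhv : aeval v h = 0 := hgh0 h (by simp)
  obtain ⟨i, hi⟩ := hsmooth v hv (by rw [hgh, map_mul, hgv, zero_mul])
  exact hi (by rw [hgh, Derivation.leibniz, map_add, smul_eq_mul, smul_eq_mul, map_mul, map_mul,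
    hgv, hhv, zero_mul, zero_mul, add_zero])

end Smooth

section Chart

theorem aeval_smul_of_isHomogeneous {σ R A : Type*} [CommSemiring R] [CommSemiring A] [Algebra R A]
    {F : MvPolynomial σ R} {d : ℕ} (hF : F.IsHomogeneous d) (c : A) (v : σ → A) :
    aeval (c • v) F = c ^ d * aeval v F := by
  rw [aeval_def, aeval_def, eval₂_eq, eval₂_eq, Finset.mul_sum]
  refine Finset.sum_congr rfl fun s hs => ?_
  simp only [Pi.smul_apply, smul_eq_mul, mul_pow, Finset.prod_mul_distrib,
    Finset.prod_pow_eq_pow_sum, hF.degree_eq_sum_deg_support hs]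
  exact mul_left_comm _ _ _

theorem dehom_zero (k : Type) [Field k] (m : ℕ) (F : MvPolynomial (Fin (m + 1)) k) :
    dehom k m 0 F = aeval (Fin.cons 1 X) F := by
  unfold dehom
  congr 2
  ext1 j
  cases j using Fin.cases <;> simp

theorem aeval_dehom_zero {k A : Type} [Field k] [CommRing A] [Algebra k A] {m : ℕ}
    (y : Fin m → A) (F : MvPolynomial (Fin (m + 1)) k) :
    aeval y (dehom k m 0 F) = aeval (Fin.cons 1 y) F := by
  rw [dehom_zero, comp_aeval_apply]
  congr 2
  funext j
  cases j using Fin.cases <;> simp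

/-- `P` is `f` homogenised with the variable `i` as denominator; stating this through values lets it
be applied at any point of any algebra. -/
theorem exists_homogenization {R κ τ : Type*} [CommRing R] (i : τ) (ρ : κ → τ)
    (f : MvPolynomial κ R) :
    ∃ (P : MvPolynomial τ R) (e : ℕ),
      ∀ {A : Type u} [CommRing A] [Algebra R A] (w : τ → A) (y : κ → A),
        (∀ j, w (ρ j) = w i * y j) → aeval w P = w i ^ e * aeval y f := by
  induction f using MvPolynomial.induction_on with
  | C a => exact ⟨C a, 0, fun w y _ => by simp⟩
  | add f g hf hg =>
    obtain ⟨P, e, hP⟩ := hf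
    obtain ⟨Q, e', hQ⟩ := hg
    refine ⟨X i ^ e' * P + X i ^ e * Q, e + e', fun w y h => ?_⟩
    simp only [map_add, map_mul, map_pow, aeval_X, hP w y h, hQ w y h]
    ring
  | mul_X f j hf =>
    obtain ⟨P, e, hP⟩ := hf
    refine ⟨P * X (ρ j), e + 1, fun w y h => ?_⟩
    simp only [map_mul, aeval_X, hP w y h, h j]
    ring

theorem not_dvd_X {R σ : Type*} [CommRing R] [IsDomain R] {F : MvPolynomial σ R} {d : ℕ}
    (hd : 2 ≤ d) (hF : F.IsHomogeneous d) (i : σ) : ¬ F ∣ X i := fun h => by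
  have hF0 : F ≠ 0 := ne_zero_of_dvd_ne_zero (X_ne_zero i) h
  have := totalDegree_le_of_dvd_of_isDomain h (X_ne_zero i)
  rw [hF.totalDegree hF0, totalDegree_X] at this
  omega

theorem exists_generic_point {k τ : Type u} [Field k] {F : MvPolynomial τ k}
    (hF : Irreducible F) :
    ∃ (L : Type u) (_ : Field L) (_ : Algebra k L) (x : τ → L), ∀ P, aeval x P = 0 ↔ F ∣ P := by
  have : (Ideal.span {F}).IsPrime := (Ideal.span_singleton_prime hF.ne_zero).mpr hF.prime
  let S := MvPolynomial τ k ⧸ Ideal.span {F}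
  let π : MvPolynomial τ k →ₐ[k] FractionRing S :=
    (IsScalarTower.toAlgHom k S (FractionRing S)).comp (Ideal.Quotient.mkₐ k _)
  refine ⟨FractionRing S, inferInstance, inferInstance, fun j => π (X j), fun P => ?_⟩
  rw [← comp_aeval_apply, aeval_X_left_apply]
  simp only [π, AlgHom.comp_apply, IsScalarTower.coe_toAlgHom',
    FaithfulSMul.algebraMap_eq_zero_iff]
  exact Ideal.Quotient.eq_zero_iff_mem.trans Ideal.mem_span_singleton

theorem isPrime_span_dehom_zero {k : Type} [Field k] {m d : ℕ}
    {F : MvPolynomial (Fin (m + 1)) k} (hd : 2 ≤ d) (hF : F.IsHomogeneous d)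
    (hirr : Irreducible F) : (Ideal.span {dehom k m 0 F}).IsPrime := by
  obtain ⟨L, _, _, x, hx⟩ := exists_generic_point hirr
  have hx0 : x 0 ≠ 0 := by
    rw [← aeval_X (R := k) x 0, ne_eq, hx]
    exact not_dvd_X hd hF 0
  let y : Fin m → L := fun j => (x 0)⁻¹ * x j.succ
  have hxy : Fin.cons 1 y = (x 0)⁻¹ • x := by
    funext j
    cases j using Fin.cases <;> simp [y, inv_mul_cancel₀ hx0]
  suffices Ideal.span {dehom k m 0 F} = RingHom.ker (aeval y) from this ▸ RingHom.ker_isPrime _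
  refine le_antisymm ?_ fun f hf => ?_
  · rw [Ideal.span_singleton_le_iff_mem, RingHom.mem_ker, aeval_dehom_zero, hxy,
      aeval_smul_of_isHomogeneous hF, (hx F).mpr dvd_rfl, mul_zero]
  · obtain ⟨P, e, hP⟩ := exists_homogenization 0 Fin.succ f
    have hPx : aeval x P = 0 := by
      rw [hP x y fun j => (mul_inv_cancel_left₀ hx0 _).symm, RingHom.mem_ker.mp hf, mul_zero]
    have hPX : aeval (Fin.cons 1 X) P = f := by
      rw [hP (Fin.cons 1 X) X fun j => by simp]
      simp
    rw [Ideal.mem_span_singleton, dehom_zero, ← hPX]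
    exact map_dvd _ ((hx P).mp hPx)

/-- `S`, with the tautological point `x`, is the coordinate ring of the affine chart `xᵢ = 1` of the
hypersurface `F = 0`. Describing the chart by what it represents makes it independent of the choice
of linear coordinates. -/
structure IsUniversalPoint {k τ : Type*} {S : Type u} [Field k] [CommRing S] [Algebra k S]
    (F : MvPolynomial τ k) (i : τ) (x : τ → S) : Prop where
  apply_eq_one : x i = 1
  aeval_eq_zero : aeval x F = 0
  surjective_aeval : Function.Surjective (aeval x : MvPolynomial τ k →ₐ[k] S)
  exists_lift {A : Type u} [CommRing A] [Algebra k A] (v : τ → A) (hi : v i = 1)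
    (hv : aeval v F = 0) : ∃ φ : S →ₐ[k] A, ∀ j, φ (x j) = v j

theorem isUniversalPoint_mk {k : Type} [Field k] {m : ℕ} (F : MvPolynomial (Fin (m + 1)) k) :
    IsUniversalPoint F 0 fun j : Fin (m + 1) =>
      Ideal.Quotient.mkₐ k (Ideal.span {dehom k m 0 F})
        ((Fin.cons 1 X : Fin (m + 1) → MvPolynomial (Fin m) k) j) where
  apply_eq_one := by simp
  aeval_eq_zero := by
    rw [← comp_aeval_apply, ← dehom_zero, Ideal.Quotient.mkₐ_eq_mk]
    exact Ideal.Quotient.eq_zero_iff_mem.mpr (Ideal.mem_span_singleton_self _)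
  surjective_aeval s := by
    obtain ⟨f, rfl⟩ := Ideal.Quotient.mkₐ_surjective k _ s
    refine ⟨rename Fin.succ f, ?_⟩
    rw [← comp_aeval_apply, aeval_rename]
    congr 1
    exact aeval_X_left_apply f
  exists_lift v hi hv := by
    have hcons : Fin.cons 1 (Fin.tail v) = v := by rw [← hi, Fin.cons_self_tail]
    refine ⟨Ideal.Quotient.liftₐ _ (aeval (Fin.tail v)) fun f hf => ?_, fun j => ?_⟩
    · obtain ⟨g, rfl⟩ := Ideal.mem_span_singleton.mp hf
      rw [map_mul, aeval_dehom_zero, hcons, hv, zero_mul]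
    · cases j using Fin.cases with
      | zero => simp [hi]
      | succ j => exact aeval_X (Fin.tail v) j

theorem IsUniversalPoint.map_algEquiv {k τ τ' : Type*} {S : Type u} [Field k] [CommRing S]
    [Algebra k S] {F : MvPolynomial τ k} {i : τ} {x : τ → S} (hx : IsUniversalPoint F i x)
    (e : MvPolynomial τ k ≃ₐ[k] MvPolynomial τ' k) {i' : τ'} (he : e (X i) = X i') :
    IsUniversalPoint (e F) i' fun j => aeval x (e.symm (X j)) := by
  have haeval (P) : aeval (fun j => aeval x (e.symm (X j))) P = aeval x (e.symm P) :=
    (DFunLike.congr_fun (algHom_ext (f := aeval fun j => aeval x (e.symm (X j)))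
      (g := (aeval x).comp e.symm.toAlgHom) fun j => by simp) P)
  refine ⟨?_, ?_, ?_, fun v hi hv => ?_⟩
  · simp [← he, hx.apply_eq_one]
  · rw [haeval, e.symm_apply_apply, hx.aeval_eq_zero]
  · intro s
    obtain ⟨P, rfl⟩ := hx.surjective_aeval s
    exact ⟨e P, by rw [haeval, e.symm_apply_apply]⟩
  · have hav (P) : aeval (fun j => aeval v (e (X j))) P = aeval v (e P) :=
      (DFunLike.congr_fun (algHom_ext (f := aeval fun j => aeval v (e (X j)))
        (g := (aeval v).comp e.toAlgHom) fun j => by simp) P)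
    obtain ⟨φ, hφ⟩ :=
      hx.exists_lift (fun j => aeval v (e (X j))) (by simp [he, hi]) (by rw [hav, hv])
    refine ⟨φ, fun j => ?_⟩
    rw [comp_aeval_apply]
    simp only [hφ, hav, e.apply_symm_apply, aeval_X]

end Chart

section Quadratic

/-- The polynomial `X² - tX + N`: the characteristic polynomial of a quadratic element of trace `t`
and norm `N`. -/
noncomputable def quadratic {R : Type*} [CommRing R] (t N : R) : Polynomial R :=
  Polynomial.X ^ 2 - Polynomial.C t * Polynomial.X + Polynomial.C N

theorem aeval_quadratic {R A : Type*} [CommRing R] [CommRing A] [Algebra R A] (t N : R) (a : A) :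
    Polynomial.aeval a (quadratic t N) = a ^ 2 - algebraMap R A t * a + algebraMap R A N := by
  simp [quadratic]

theorem natDegree_quadratic {R : Type*} [CommRing R] [Nontrivial R] (t N : R) :
    (quadratic t N).natDegree = 2 := by
  unfold quadratic
  compute_degree!

theorem monic_quadratic {R : Type*} [CommRing R] (t N : R) : (quadratic t N).Monic := by
  unfold quadratic
  monicity!

variable {k K : Type*} [Field k] [Field K] [Algebra k K]

theorem exists_notMem_range_algebraMap (h : Module.finrank k K ≠ 1) :
    ∃ δ : K, δ ∉ Set.range (algebraMap k K) := by
  by_contra! hrange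
  refine h (Subalgebra.bot_eq_top_iff_finrank_eq_one.mp (eq_top_iff.mpr fun δ _ => ?_))
  exact Algebra.mem_bot.mpr (hrange δ)

theorem not_isRoot_quadratic {t N : k} {δ : K} (hδ : δ ∉ Set.range (algebraMap k K))
    (hroot : Polynomial.aeval δ (quadratic t N) = 0) (a : k) : ¬ (quadratic t N).IsRoot a := by
  intro ha
  rw [Polynomial.IsRoot, ← Polynomial.coe_aeval_eq_eval, aeval_quadratic] at ha
  apply_fun algebraMap k K at ha
  rw [aeval_quadratic] at hroot
  have hfactor : (δ - algebraMap k K a) * (δ - algebraMap k K (t - a)) = 0 := by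
    rw [map_sub]
    simp only [Algebra.algebraMap_self, RingHom.id_apply, map_add, map_sub, map_mul, map_pow,
      map_zero] at ha
    linear_combination hroot - ha
  rcases mul_eq_zero.mp hfactor with h | h
  · exact hδ ⟨a, (sub_eq_zero.mp h).symm⟩
  · exact hδ ⟨t - a, (sub_eq_zero.mp h).symm⟩

theorem eq_zero_of_add_mul_eq_zero {δ : K} (hδ : δ ∉ Set.range (algebraMap k K)) {a b : k}
    (h : algebraMap k K a + algebraMap k K b * δ = 0) : a = 0 ∧ b = 0 := by
  have hb : b = 0 := by
    by_contra hb
    have hb' : algebraMap k K b ≠ 0 := by simpa using hb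
    refine hδ ⟨-a / b, ?_⟩
    rw [map_div₀, map_neg, div_eq_iff hb']
    linear_combination -h
  subst hb
  simpa using h

theorem exists_quadratic_coordinate (hquad : Module.finrank k K = 2) {δ : K}
    (hδ : δ ∉ Set.range (algebraMap k K)) :
    ∃ (t N : k) (ℓ : K →ₗ[k] k), Polynomial.aeval δ (quadratic t N) = 0 ∧ ℓ 1 = 0 ∧
      ℓ (δ - algebraMap k K t) = 1 ∧
      ∀ y, y = algebraMap k K (ℓ ((δ - algebraMap k K t) * y)) + algebraMap k K (ℓ y) * δ := by
  have hli : LinearIndependent k ![1, δ] := by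
    refine LinearIndependent.pair_iff.mpr fun a b h => eq_zero_of_add_mul_eq_zero hδ ?_
    simpa [Algebra.smul_def] using h
  let b := basisOfLinearIndependentOfCardEqFinrank hli (by simp [hquad])
  have hb0 : b 0 = 1 := by simp [b]
  have hb1 : b 1 = δ := by simp [b]
  have hℓ1 : b.coord 1 1 = 0 := by
    rw [← hb0]
    simp
  have hℓδ : b.coord 1 δ = 1 := by
    conv_lhs => rw [← hb1]
    simp
  have hsum (y : K) : y = algebraMap k K (b.coord 0 y) + algebraMap k K (b.coord 1 y) * δ := by
    have := b.sum_repr y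
    rw [Fin.sum_univ_two, hb0, hb1, Algebra.smul_def, Algebra.smul_def, mul_one] at this
    exact this.symm
  have hscalar (a : k) : b.coord 1 (algebraMap k K a) = 0 := by
    rw [Algebra.algebraMap_eq_smul_one, map_smul, hℓ1, smul_zero]
  have hsq := hsum (δ ^ 2)
  set t := b.coord 1 (δ ^ 2)
  set N := b.coord 0 (δ ^ 2)
  refine ⟨t, -N, b.coord 1, ?_, hℓ1, ?_, fun y => ?_⟩
  · rw [aeval_quadratic, hsq, map_neg]
    ring
  · rw [map_sub, hℓδ, hscalar, sub_zero]
  · have hmul : (δ - algebraMap k K t) * y =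
        algebraMap k K (b.coord 1 y * N - t * b.coord 0 y) + b.coord 0 y • δ := by
      rw [Algebra.smul_def, map_sub, map_mul, map_mul]
      linear_combination (δ - algebraMap k K t) * hsum y + algebraMap k K (b.coord 1 y) * hsq
    rw [hmul, map_add, hscalar, map_smul, hℓδ, smul_eq_mul, mul_one, zero_add]
    exact hsum y

theorem quadratic_dvd_of_aeval_eq_zero {t N : k} {δ : K} (hδ : δ ∉ Set.range (algebraMap k K))
    (hroot : Polynomial.aeval δ (quadratic t N) = 0) {P : Polynomial k}
    (hP : Polynomial.aeval δ P = 0) : quadratic t N ∣ P := by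
  have hirr : Irreducible (quadratic t N) :=
    Polynomial.irreducible_of_degree_le_three_of_not_isRoot (by simp [natDegree_quadratic])
      (not_isRoot_quadratic hδ hroot)
  rw [minpoly.eq_of_irreducible_of_monic hirr hroot (monic_quadratic t N)]
  exact minpoly.dvd k δ hP

end Quadratic

section Planes

theorem exists_basis_coord_eq {K V ι : Type*} [Field K] [AddCommGroup V] [Module K V] [Fintype ι]
    (hV : Module.finrank K V = Fintype.card ι) {f : V →ₗ[K] K} (hf : f ≠ 0) (j₀ : ι) :
    ∃ b : Module.Basis ι K V, b.coord j₀ = f := by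
  classical
  have : Nonempty ι := ⟨j₀⟩
  have := Module.finite_of_finrank_pos (hV ▸ Fintype.card_pos)
  obtain ⟨v, hv⟩ : ∃ v, f v = 1 := by
    obtain ⟨w, hw⟩ := DFunLike.ne_iff.mp hf
    exact ⟨(f w)⁻¹ • w, by simpa using inv_mul_cancel₀ hw⟩
  obtain ⟨s, b, i, -, hb⟩ := _root_.exists_basis_of_pairing_ne_zero (hv ▸ one_ne_zero : f v ≠ 0)
  have := Module.Finite.finite_basis b
  have := Fintype.ofFinite s
  let e : s ≃ ι := Fintype.equivOfCardEq (by rw [← Module.finrank_eq_card_basis b, hV])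
  refine ⟨b.reindex (e.trans (Equiv.swap (e i) j₀)), ?_⟩
  rw [hv, one_smul] at hb
  rw [hb]
  ext w
  simp [Module.Basis.repr_reindex_apply, -Module.Basis.repr_reindex]

variable {k K τ ι : Type*} [Field k] [Field K] [Algebra k K]

/-- The vectors `aⱼ = (ℓ (ε eⱼᵢ))ᵢ` and `bⱼ = (ℓ (eⱼᵢ))ᵢ` over `k`. When `ℓ` is the `δ`-coordinate
of `K = k ⊕ kδ` and `ε = δ - t` with `t` the trace of `δ`, they are the `k`-components of
`eⱼ = aⱼ + δ bⱼ`. -/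
def planeCoordinates (ℓ : K →ₗ[k] k) (ε : K) (e : ι → τ → K) : ι ⊕ ι → τ → k :=
  Sum.elim (fun j i => ℓ (ε * e j i)) (fun j i => ℓ (e j i))

theorem linearIndependent_planeCoordinates [Finite ι] {δ : K}
    (hδ : δ ∉ Set.range (algebraMap k K)) {t : k} {ℓ : K →ₗ[k] k}
    (hℓ : ∀ y, y = algebraMap k K (ℓ ((δ - algebraMap k K t) * y)) + algebraMap k K (ℓ y) * δ)
    (σ : K ≃ₐ[k] K) {H : Submodule K (τ → K)} (hskew : ∀ x ∈ H, (fun i => σ (x i)) ∈ H → x = 0)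
    (e : Module.Basis ι K H) :
    LinearIndependent k (planeCoordinates ℓ (δ - algebraMap k K t) fun j => (e j : τ → K)) := by
  have := Fintype.ofFinite ι
  refine Fintype.linearIndependent_iff.mpr fun g hg => ?_
  let c (j : ι) : K :=
    algebraMap k K (g (.inl j)) * (δ - algebraMap k K t) + algebraMap k K (g (.inr j))
  let x : H := ∑ j, c j • e j
  have hℓx (i : τ) : ℓ ((x : τ → K) i) = 0 := by
    have hgi := congrFun hg i
    simp only [planeCoordinates, Fintype.sum_sum_type, Sum.elim_inl, Sum.elim_inr,
      Finset.sum_apply, Pi.smul_apply, Pi.zero_apply] at hgi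
    simpa [x, c, add_mul, mul_assoc, ← Algebra.smul_def, Finset.sum_add_distrib] using hgi
  have hfixed : (fun i => σ ((x : τ → K) i)) = x := by
    funext i
    rw [hℓ ((x : τ → K) i), hℓx]
    simp
  have hx : x = 0 := Subtype.ext (hskew x x.2 (by rw [hfixed]; exact x.2))
  have hc := Fintype.linearIndependent_iff.mp e.linearIndependent c hx
  have hg0 (j) : g (.inr j) - g (.inl j) * t = 0 ∧ g (.inl j) = 0 := by
    refine eq_zero_of_add_mul_eq_zero hδ ?_
    rw [← hc j, map_sub, map_mul]
    ring
  rintro (j | j)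
  · exact (hg0 j).2
  · simpa [(hg0 j).2] using (hg0 j).1

theorem exists_basis_eq_planeCoordinates [Finite τ] [Fintype ι] {δ : K}
    (hδ : δ ∉ Set.range (algebraMap k K)) {t : k} {ℓ : K →ₗ[k] k}
    (hℓ : ∀ y, y = algebraMap k K (ℓ ((δ - algebraMap k K t) * y)) + algebraMap k K (ℓ y) * δ)
    (σ : K ≃ₐ[k] K) {H : Submodule K (τ → K)} (hskew : ∀ x ∈ H, (fun i => σ (x i)) ∈ H → x = 0)
    (hτ : Nat.card τ = Fintype.card ι + Fintype.card ι) (e : Module.Basis ι K H) :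
    ∃ B : Module.Basis (ι ⊕ ι) k (τ → k),
      ⇑B = planeCoordinates ℓ (δ - algebraMap k K t) fun j => (e j : τ → K) := by
  have := Fintype.ofFinite τ
  have hcard : Fintype.card (ι ⊕ ι) = Module.finrank k (τ → k) := by
    rw [Fintype.card_sum, ← hτ, Nat.card_eq_fintype_card, Module.finrank_pi]
  exact ⟨basisOfLinearIndependentOfCardEqFinrank' _
    (linearIndependent_planeCoordinates hδ hℓ σ hskew e) hcard, by simp⟩

theorem sum_planeCoordinates_mul [Fintype ι] {δ : K} {t : k} {ℓ : K →ₗ[k] k}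
    (hℓ : ∀ y, y = algebraMap k K (ℓ ((δ - algebraMap k K t) * y)) + algebraMap k K (ℓ y) * δ)
    (e : ι → τ → K) (c : ι → K) (i : τ) :
    ∑ s, algebraMap k K (planeCoordinates ℓ (δ - algebraMap k K t) e s i) *
      Sum.elim c (δ • c) s = ∑ j, c j * e j i := by
  simp only [planeCoordinates, Fintype.sum_sum_type, Sum.elim_inl, Sum.elim_inr,
    ← Finset.sum_add_distrib, Pi.smul_apply, smul_eq_mul]
  refine Finset.sum_congr rfl fun j _ => ?_
  linear_combination -(c j) * hℓ (e j i)

theorem exists_mem_apply_ne_zero {B : Module.Basis (ι ⊕ ι) k (τ → k)} {ℓ : K →ₗ[k] k} {ε : K}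
    {H : Submodule K (τ → K)} {e : ι → H}
    (hB : ⇑B = planeCoordinates ℓ ε fun j => (e j : τ → K)) (i : τ) :
    ∃ x ∈ H, x i ≠ 0 := by
  classical
  by_contra! hH
  have hproj : LinearMap.proj (R := k) (φ := fun _ : τ => k) i = 0 := B.ext fun s => by
    rw [LinearMap.proj_apply, hB, LinearMap.zero_apply]
    rcases s with j | j <;> simp [planeCoordinates, hH _ (e j).2]
  simpa using DFunLike.congr_fun hproj (Pi.single i 1)

theorem exists_basis_of_skew_conjugate [Finite τ] [Fintype ι] [DecidableEq ι]
    (hquad : Module.finrank k K = 2) (σ : K ≃ₐ[k] K) {δ : K} (hδ : δ ∉ Set.range (algebraMap k K))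
    {H : Submodule K (τ → K)} (hd : Module.finrank K H = Fintype.card ι)
    (hτ : Nat.card τ = Fintype.card ι + Fintype.card ι)
    (hskew : ∀ x ∈ H, (fun i => σ (x i)) ∈ H → x = 0) (i₀ : τ) (j₀ : ι) :
    ∃ B : Module.Basis (ι ⊕ ι) k (τ → k),
      (∀ s, B s i₀ = if s = .inl j₀ then 1 else 0) ∧
      ∀ c : ι → K, (fun i => ∑ s, algebraMap k K (B s i) * Sum.elim c (δ • c) s) ∈ H := by
  obtain ⟨t, N, ℓ, -, hℓ1, hℓδ, hℓ⟩ := exists_quadratic_coordinate hquad hδ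
  let f : H →ₗ[K] K := (LinearMap.proj i₀).comp H.subtype
  have hf : f ≠ 0 := fun hf => by
    obtain ⟨B, hB⟩ := exists_basis_eq_planeCoordinates hδ hℓ σ hskew hτ
      ((Module.finBasisOfFinrankEq K H hd).reindex (Fintype.equivFin ι).symm)
    obtain ⟨x, hxH, hx⟩ := exists_mem_apply_ne_zero hB i₀
    exact hx (DFunLike.congr_fun hf ⟨x, hxH⟩)
  obtain ⟨e, he⟩ := exists_basis_coord_eq hd hf j₀
  have he₀ (j : ι) : (e j : τ → K) i₀ = if j = j₀ then 1 else 0 := by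
    change f (e j) = _
    rw [← he]
    simp [Finsupp.single_apply]
  obtain ⟨B, hB⟩ := exists_basis_eq_planeCoordinates hδ hℓ σ hskew hτ e
  refine ⟨B, fun s => ?_, fun c => ?_⟩
  · rcases s with j | j <;> by_cases hj : j = j₀ <;>
      simp [hB, planeCoordinates, he₀, hj, hℓ1, hℓδ]
  · have hsum : (fun i => ∑ s, algebraMap k K (B s i) * Sum.elim c (δ • c) s) =
        ((∑ j, c j • e j : H) : τ → K) := by
      funext i
      rw [hB, sum_planeCoordinates_mul hℓ]
      simp
    rw [hsum]
    exact Subtype.coe_prop _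

end Planes

section Substitution

variable {k τ ι : Type*} [Field k] [Fintype τ] [Fintype ι]

/-- The linear substitution `xᵢ = ∑ s, (B s)ᵢ yₛ` that rewrites a polynomial function of a vector in
terms of its coordinates `yₛ` in the basis `B`. -/
noncomputable def basisSubstitution (B : Module.Basis ι k (τ → k)) :
    MvPolynomial τ k ≃ₐ[k] MvPolynomial ι k := by
  classical
  exact AlgEquiv.ofAlgHom (bind₁ ((Pi.basisFun k τ).toMatrix B).toMvPolynomial)
    (bind₁ (B.toMatrix (Pi.basisFun k τ)).toMvPolynomial)
    (algHom_ext fun i => by simp [← Matrix.toMvPolynomial_mul])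
    (algHom_ext fun i => by simp [← Matrix.toMvPolynomial_mul])

theorem basisSubstitution_X (B : Module.Basis ι k (τ → k)) (i : τ) :
    basisSubstitution B (X i) = ∑ s, C (B s i) * X s := by
  classical
  simp [basisSubstitution, Matrix.toMvPolynomial, Module.Basis.toMatrix_apply,
    C_mul_X_eq_monomial]

theorem aeval_basisSubstitution {A : Type*} [CommRing A] [Algebra k A]
    (B : Module.Basis ι k (τ → k)) (w : ι → A) (F : MvPolynomial τ k) :
    aeval w (basisSubstitution B F) = aeval (fun i => ∑ s, algebraMap k A (B s i) * w s) F := by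
  refine DFunLike.congr_fun (algHom_ext (f := (aeval w).comp (basisSubstitution B).toAlgHom)
    fun i => ?_) F
  simp [basisSubstitution_X]

theorem isHomogeneous_basisSubstitution (B : Module.Basis ι k (τ → k)) {F : MvPolynomial τ k}
    {d : ℕ} (hF : F.IsHomogeneous d) : (basisSubstitution B F).IsHomogeneous d := by
  rw [← aeval_X_left_apply (basisSubstitution B F), aeval_basisSubstitution, ← one_mul d]
  refine hF.aeval _ fun i => IsHomogeneous.sum _ _ _ fun s _ => ?_
  exact isHomogeneous_C_mul_X _ _

end Substitution

section Degree

variable {R A ι : Type*} [CommSemiring R] [CommSemiring A] [Algebra R A]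
  {F : MvPolynomial ι R} {d : ℕ} {f : ι → Polynomial A}

theorem aeval_eq_sum_multiset_prod (f : ι → A) (F : MvPolynomial ι R) :
    aeval f F = ∑ e ∈ F.support, algebraMap R A (F.coeff e) * (e.toMultiset.map f).prod := by
  simp_rw [aeval_def, eval₂_eq, Finsupp.toMultiset_map, Finsupp.prod_toMultiset,
    Finsupp.prod_mapDomain_index pow_zero pow_add, Finsupp.prod]

theorem card_toMultiset_of_isHomogeneous (hF : F.IsHomogeneous d) {e : ι →₀ ℕ}
    (he : e ∈ F.support) : (Finsupp.toMultiset e).card = d := by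
  rw [Finsupp.card_toMultiset, hF.degree_eq_sum_deg_support he]
  rfl

theorem natDegree_aeval_le_of_isHomogeneous (hF : F.IsHomogeneous d)
    (hf : ∀ i, (f i).natDegree ≤ 1) : (aeval f F).natDegree ≤ d := by
  rw [aeval_eq_sum_multiset_prod]
  refine Polynomial.natDegree_sum_le_of_forall_le _ _ fun e he => ?_
  rw [IsScalarTower.algebraMap_apply R A (Polynomial A), ← card_toMultiset_of_isHomogeneous hF he]
  refine (Polynomial.natDegree_C_mul_le _ _).trans
    ((Polynomial.natDegree_multiset_prod_le _).trans ?_)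
  simpa using Multiset.sum_le_card_nsmul ((Finsupp.toMultiset e).map fun i => (f i).natDegree) 1
    (by simp +contextual [hf])

theorem coeff_aeval_of_isHomogeneous (hF : F.IsHomogeneous d) (hf : ∀ i, (f i).natDegree ≤ 1) :
    (aeval f F).coeff d = aeval (fun i => (f i).coeff 1) F := by
  simp_rw [aeval_eq_sum_multiset_prod, Polynomial.finsetSum_coeff]
  refine Finset.sum_congr rfl fun e he => ?_
  have hprod := Polynomial.coeff_multiset_prod_of_natDegree_le
    ((Finsupp.toMultiset e).map f) 1 (by simp +contextual [hf])
  rw [Multiset.card_map, card_toMultiset_of_isHomogeneous hF he, mul_one, Multiset.map_map] at hprod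
  rw [IsScalarTower.algebraMap_apply R A (Polynomial A), Polynomial.algebraMap_eq,
    Polynomial.coeff_C_mul, hprod]
  rfl

end Degree

section Lines

/-- The point with parameter `s` on the line joining the point `(c, δc)`, `c = p + δq`, of the plane
`{(c, δc)}` to its conjugate, where `δ² = tδ - N`. The value at `s = δ` is `(c, δc)` itself. -/
def linePoint {k A ι : Type*} [CommRing k] [CommRing A] [Algebra k A] (t N : k) (s : A)
    (p q : ι → A) : ι ⊕ ι → A :=
  Sum.elim (p + s • q) (s • (p + t • q) - N • q)

variable {k A B ι : Type*} [CommRing k] [CommRing A] [Algebra k A] [CommRing B] [Algebra k B]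
  (t N : k)

theorem map_linePoint (φ : A →ₐ[k] B) (s : A) (p q : ι → A) (j : ι ⊕ ι) :
    φ (linePoint t N s p q j) = linePoint t N (φ s) (φ ∘ p) (φ ∘ q) j := by
  rcases j with j | j <;> simp [linePoint, map_smul]

theorem map_aeval_linePoint (φ : A →ₐ[k] B) (s : A) (p q : ι → A) (G : MvPolynomial (ι ⊕ ι) k) :
    φ (aeval (linePoint t N s p q) G) = aeval (linePoint t N (φ s) (φ ∘ p) (φ ∘ q)) G := by
  rw [comp_aeval_apply]
  congr 2
  exact funext (map_linePoint t N φ s p q)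

theorem linePoint_of_aeval_quadratic_eq_zero {δ : A}
    (hδ : Polynomial.aeval δ (quadratic t N) = 0) (p q : ι → A) :
    linePoint t N δ p q = Sum.elim (p + δ • q) (δ • (p + δ • q)) := by
  rw [aeval_quadratic] at hδ
  unfold linePoint
  congr 1
  funext i
  simp only [Pi.sub_apply, Pi.smul_apply, Pi.add_apply]
  simp only [smul_eq_mul, Algebra.smul_def]
  linear_combination -(q i) * hδ

end Lines

section Residual

theorem map_C_dvd_of_forall_dvd_map_eval {k κ : Type*} [Field k] [Infinite k] {m : Polynomial k}
    (hm : m.Monic) {P : Polynomial (MvPolynomial κ k)} (h : ∀ w : κ → k, m ∣ P.map (eval w)) :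
    m.map C ∣ P := by
  rw [← Polynomial.modByMonic_eq_zero_iff_dvd (hm.map _)]
  ext1 j
  refine MvPolynomial.funext fun w => ?_
  have hmap : (m.map C).map (eval w) = m := by
    rw [Polynomial.map_map, show (eval w).comp C = RingHom.id k by ext; simp, Polynomial.map_id]
  rw [← Polynomial.coeff_map, Polynomial.map_modByMonic _ (hm.map _), hmap,
    (Polynomial.modByMonic_eq_zero_iff_dvd hm).mpr (h w)]
  simp

variable {k K ι κ : Type*} [Field k] [Field K] [Algebra k K]

theorem quadratic_dvd_aeval_linePoint [Infinite k] {t N : k} {δ : K}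
    (hδ : δ ∉ Set.range (algebraMap k K)) (hroot : Polynomial.aeval δ (quadratic t N) = 0)
    {G : MvPolynomial (ι ⊕ ι) k} (hG : ∀ c : ι → K, aeval (Sum.elim c (δ • c)) G = 0)
    (p q : ι → MvPolynomial κ k) :
    (quadratic t N).map C ∣
      aeval (linePoint t N Polynomial.X (Polynomial.C ∘ p) (Polynomial.C ∘ q)) G := by
  refine map_C_dvd_of_forall_dvd_map_eval (monic_quadratic t N) fun w =>
    quadratic_dvd_of_aeval_eq_zero hδ hroot ?_
  let φ : Polynomial (MvPolynomial κ k) →ₐ[k] K :=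
    (Polynomial.aeval δ).comp (Polynomial.mapAlgHom (aeval w))
  change φ _ = 0
  have hX : φ Polynomial.X = δ := by simp [φ]
  rw [map_aeval_linePoint, hX, linePoint_of_aeval_quadratic_eq_zero t N hroot, hG]

theorem natDegree_linePoint_X_le {R : Type*} [CommRing R] [Algebra k R] (t N : k)
    (p q : ι → R) (j : ι ⊕ ι) :
    (linePoint t N Polynomial.X (Polynomial.C ∘ p) (Polynomial.C ∘ q) j).natDegree ≤ 1 := by
  rcases j with j | j <;>
  · simp only [linePoint, Sum.elim_inl, Sum.elim_inr, Pi.add_apply, Pi.sub_apply, Pi.smul_apply,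
      Function.comp_apply, smul_eq_mul, Polynomial.smul_C, ← Polynomial.C_add]
    compute_degree

theorem coeff_one_linePoint_X {R : Type*} [CommRing R] [Algebra k R] (t N : k)
    (p q : ι → R) (j : ι ⊕ ι) :
    (linePoint t N Polynomial.X (Polynomial.C ∘ p) (Polynomial.C ∘ q) j).coeff 1 =
      Sum.elim q (p + t • q) j := by
  rcases j with j | j <;> simp [linePoint, Polynomial.coeff_C]

theorem exists_aeval_linePoint_X_eq [Infinite k] {t N : k} {δ : K}
    (hδ : δ ∉ Set.range (algebraMap k K))
    (hroot : Polynomial.aeval δ (quadratic t N) = 0) {G : MvPolynomial (ι ⊕ ι) k}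
    (hG : G.IsHomogeneous 3) (hGδ : ∀ c : ι → K, aeval (Sum.elim c (δ • c)) G = 0)
    (p q : ι → MvPolynomial κ k) :
    ∃ b : MvPolynomial κ k,
      aeval (linePoint t N Polynomial.X (Polynomial.C ∘ p) (Polynomial.C ∘ q)) G =
        (quadratic t N).map C *
          (Polynomial.C (aeval (Sum.elim q (p + t • q)) G) * Polynomial.X + Polynomial.C b) := by
  obtain ⟨Q, hQ⟩ := quadratic_dvd_aeval_linePoint hδ hroot hGδ p q
  have hm : ((quadratic t N).map (C (σ := κ))).Monic := (monic_quadratic t N).map _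
  have hm2 : ((quadratic t N).map (C (σ := κ))).natDegree = 2 := by
    rw [(monic_quadratic t N).natDegree_map, natDegree_quadratic]
  have hQ1 : Q.natDegree ≤ 1 := by
    rcases eq_or_ne Q 0 with rfl | hQ0
    · simp
    have h3 := natDegree_aeval_le_of_isHomogeneous hG (natDegree_linePoint_X_le t N p q)
    rw [hQ, hm.natDegree_mul' hQ0, hm2] at h3
    omega
  have hlead : Q.coeff 1 = aeval (Sum.elim q (p + t • q)) G := by
    have h3 := coeff_aeval_of_isHomogeneous hG (natDegree_linePoint_X_le t N p q)
    rw [funext (coeff_one_linePoint_X t N p q), hQ,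
      Polynomial.coeff_mul_add_eq_of_natDegree_le (df := 2) (dg := 1) hm2.le hQ1, ← hm2,
      hm.coeff_natDegree, one_mul] at h3
    exact h3
  rw [hQ, ← hlead]
  exact ⟨Q.coeff 0, by rw [← Polynomial.eq_X_add_C_of_natDegree_le_one hQ1]⟩

theorem exists_residual [Infinite k] {t N : k} {δ : K} (hδ : δ ∉ Set.range (algebraMap k K))
    (hroot : Polynomial.aeval δ (quadratic t N) = 0) {G : MvPolynomial (ι ⊕ ι) k}
    (hG : G.IsHomogeneous 3) (hGδ : ∀ c : ι → K, aeval (Sum.elim c (δ • c)) G = 0)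
    (p q : ι → MvPolynomial κ k) :
    ∃ b : MvPolynomial κ k, ∀ {A : Type u} [CommRing A] [Algebra k A] (s : A) (y : κ → A),
      aeval (linePoint t N s (aeval y ∘ p) (aeval y ∘ q)) G =
        Polynomial.aeval s (quadratic t N) *
          (aeval y (aeval (Sum.elim q (p + t • q)) G) * s + aeval y b) := by
  obtain ⟨b, hb⟩ := exists_aeval_linePoint_X_eq hδ hroot hG hGδ p q
  refine ⟨b, fun {A} _ _ s y => ?_⟩
  let φ : Polynomial (MvPolynomial κ k) →ₐ[k] A :=
    ((Polynomial.aeval s).restrictScalars k).comp (Polynomial.mapAlgHom (aeval y))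
  have hφ (P) : φ P = Polynomial.aeval s (P.map (aeval y : MvPolynomial κ k →ₐ[k] A).toRingHom) :=
    rfl
  have hC : φ ∘ Polynomial.C = aeval y := by
    funext r
    rw [Function.comp_apply, hφ, Polynomial.map_C, Polynomial.aeval_C]
    rfl
  have hX : φ Polynomial.X = s := by simp [hφ]
  have hm : φ ((quadratic t N).map C) = Polynomial.aeval s (quadratic t N) := by
    simp [hφ, quadratic]
  have h := congrArg φ hb
  rw [map_aeval_linePoint, map_mul, hm, map_add, map_mul, hX, ← Function.comp_assoc,
    ← Function.comp_assoc, hC] at h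
  rw [h, ← hC]
  rfl

end Residual

section Generic

theorem aeval_ne_zero_of_monic_of_not_isRoot {k κ : Type*} [Field k] {m : Polynomial k}
    (hm : m.Monic) (hroot : ∀ a, ¬ m.IsRoot a) (s : FractionRing (MvPolynomial κ k)) :
    Polynomial.aeval s m ≠ 0 := by
  intro hs
  have hint : IsIntegral (MvPolynomial κ k) s := IsIntegral.tower_top (R := k) ⟨m, hm, hs⟩
  obtain ⟨r, rfl⟩ := IsIntegrallyClosed.isIntegral_iff.mp hint
  rw [Polynomial.aeval_algebraMap_apply, FaithfulSMul.algebraMap_eq_zero_iff] at hs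
  apply hroot (aeval (0 : κ → k) r)
  rw [Polynomial.IsRoot, ← Polynomial.coe_aeval_eq_eval, Polynomial.aeval_algHom_apply, hs,
    map_zero]

theorem X_dvd_of_aeval_update_eq_zero {R σ : Type*} [CommRing R] [DecidableEq σ] {i : σ}
    {F : MvPolynomial σ R} (h : aeval (Function.update X i 0 : σ → MvPolynomial σ R) F = 0) :
    X i ∣ F := by
  let π := Ideal.Quotient.mkₐ R (Ideal.span {(X i : MvPolynomial σ R)})
  have hπ : π.comp (aeval (Function.update X i 0)) = π := algHom_ext fun j => by
    rcases eq_or_ne j i with rfl | hj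
    · simp [π]
    · simp [hj]
  rw [← Ideal.mem_span_singleton, ← Ideal.Quotient.eq_zero_iff_mem]
  change π F = 0
  rw [← hπ, AlgHom.comp_apply, h, map_zero]

theorem exists_aeval_ne_zero_of_not_X_dvd {k σ : Type*} [Field k] [Infinite k]
    {G : MvPolynomial σ k} {d : ℕ} (hG : G.IsHomogeneous d) {i j : σ} (hij : j ≠ i)
    (hi : ¬ X i ∣ G) :
    ∃ v : σ → k, v i = 0 ∧ v j = 1 ∧ aeval v G ≠ 0 := by
  classical
  let H : MvPolynomial σ k := aeval (Function.update X i 0) G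
  have hH : H * X j ≠ 0 := mul_ne_zero (mt X_dvd_of_aeval_update_eq_zero hi) (X_ne_zero j)
  obtain ⟨w, hw⟩ : ∃ w : σ → k, aeval w (H * X j) ≠ 0 := by
    by_contra! h
    exact hH (MvPolynomial.funext fun w => by simpa [coe_aeval_eq_eval] using h w)
  rw [map_mul, aeval_X, mul_ne_zero_iff] at hw
  obtain ⟨hwH, hwj⟩ := hw
  have hv : aeval (Function.update w i 0) G = aeval w H := by
    rw [comp_aeval_apply]
    congr 2
    funext l
    rcases eq_or_ne l i with rfl | hl <;> simp [*]
  refine ⟨(w j)⁻¹ • Function.update w i 0, by simp, by simp [hij, hwj], ?_⟩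
  rw [aeval_smul_of_isHomogeneous hG, hv]
  exact mul_ne_zero (pow_ne_zero _ (inv_ne_zero hwj)) hwH

end Generic

section FunctionField

theorem nonempty_algEquiv_fractionRing_mvPolynomial {k E κ : Type*} [Field k] [Field E]
    [Algebra k E] {y : κ → E} (hy : AlgebraicIndependent k y)
    (htop : IntermediateField.adjoin k (Set.range y) = ⊤) :
    Nonempty (E ≃ₐ[k] FractionRing (MvPolynomial κ k)) :=
  ⟨((hy.aevalEquivField.trans (IntermediateField.equivOfEq htop)).trans
    IntermediateField.topEquiv).symm⟩

theorem nonempty_algEquiv_fractionRing_of_equiv (k : Type*) [Field k] {κ κ' : Type*}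
    (e : κ ≃ κ') :
    Nonempty (FractionRing (MvPolynomial κ k) ≃ₐ[k] FractionRing (MvPolynomial κ' k)) :=
  ⟨IsFractionRing.fieldEquivOfAlgEquiv k _ _ (renameEquiv k e)⟩

theorem intermediateField_eq_top {k S E τ : Type*} [Field k] [CommRing S] [Algebra k S] [Field E]
    [Algebra k E] [Algebra S E] [IsScalarTower k S E] [IsFractionRing S E] {x : τ → S}
    (hx : Function.Surjective (aeval x : MvPolynomial τ k →ₐ[k] S)) {M : IntermediateField k E}
    (hM : ∀ j, algebraMap S E (x j) ∈ M) : M = ⊤ := by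
  have hS (s : S) : algebraMap S E s ∈ M := by
    obtain ⟨P, rfl⟩ := hx s
    rw [← aeval_algebraMap_apply]
    induction P using MvPolynomial.induction_on with
    | C a => simp
    | add P Q hP hQ => simpa using add_mem hP hQ
    | mul_X P j hP => simpa using mul_mem hP (hM j)
  refine eq_top_iff.mpr fun z _ => ?_
  obtain ⟨a, b, -, rfl⟩ := IsFractionRing.div_surjective (A := S) z
  exact div_mem (hS a) (hS b)

theorem algebraicIndependent_div {k κ : Type*} {S L E : Type u} [Field k] [CommRing S]
    [Algebra k S] [Field L] [Algebra k L] [Field E] [Algebra k E] [Algebra S E]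
    [IsScalarTower k S E] [FaithfulSMul S E] (φ : S →ₐ[k] L) {D : S} (hD : φ D ≠ 0) {a : κ → S}
    {z : κ → L} (hz : AlgebraicIndependent k z) (ha : ∀ j, φ (a j) = φ D * z j) :
    AlgebraicIndependent k fun j => algebraMap S E (a j) / algebraMap S E D := by
  have hDE : algebraMap S E D ≠ 0 := by
    rw [ne_eq, FaithfulSMul.algebraMap_eq_zero_iff]
    rintro rfl
    exact hD (map_zero φ)
  rw [algebraicIndependent_iff]
  intro f hf
  obtain ⟨P, e, hP⟩ := exists_homogenization none some f
  let w : Option κ → S := fun o => o.elim D a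
  have hE : algebraMap S E (aeval w P) = 0 := by
    rw [← IsScalarTower.coe_toAlgHom' k S E, comp_aeval_apply,
      hP _ _ fun j => (mul_div_cancel₀ _ hDE).symm]
    exact mul_eq_zero_of_right _ hf
  have hS : aeval w P = 0 := (FaithfulSMul.algebraMap_eq_zero_iff S E).mp hE
  have hL : φ D ^ e * aeval z f = 0 := by
    rw [← map_zero φ, ← hS, comp_aeval_apply, hP _ z ha]
    rfl
  exact (algebraicIndependent_iff.mp hz) f ((mul_eq_zero.mp hL).resolve_left (pow_ne_zero e hD))

end FunctionField

section LineCoordinates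

variable {k A B : Type*} [Field k] [CommRing A] [Algebra k A] [CommRing B] [Algebra k B] {n : ℕ}
  (t N : k)

/-- The point with parameter `s` on the line joining `(c, δc)` to its conjugate, normalised to
`c₀ = 1`: the remaining coordinates of `c = p + δq` are `y = (p₁, …, pₙ, q₁, …, qₙ)`. Thus `(s, y)`
are birational coordinates on the chart where the first coordinate is `1`. -/
def chartPoint (s : A) (y : Fin n ⊕ Fin n → A) : Fin (n + 1) ⊕ Fin (n + 1) → A :=
  linePoint t N s (Fin.cons 1 (y ∘ Sum.inl)) (Fin.cons 0 (y ∘ Sum.inr))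

/-- The numerators of the coordinates `y` inverting `chartPoint t N s y = v`. Here `s = v (.inr 0)`,
and the common denominator is `s² - ts + N`. -/
def chartNumerator (v : Fin (n + 1) ⊕ Fin (n + 1) → A) : Fin n ⊕ Fin n → A :=
  Sum.elim
    (fun j => v (.inr 0) * v (.inr j.succ) - (t • v (.inr 0) - algebraMap k A N) * v (.inl j.succ))
    (fun j => v (.inr 0) * v (.inl j.succ) - v (.inr j.succ))

theorem map_chartPoint (φ : A →ₐ[k] B) (s : A) (y : Fin n ⊕ Fin n → A)
    (j : Fin (n + 1) ⊕ Fin (n + 1)) :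
    φ (chartPoint t N s y j) = chartPoint t N (φ s) (φ ∘ y) j := by
  rw [chartPoint, map_linePoint, Fin.comp_cons, Fin.comp_cons, map_one, map_zero]
  rfl

theorem map_chartNumerator (φ : A →ₐ[k] B) (v : Fin (n + 1) ⊕ Fin (n + 1) → A)
    (j : Fin n ⊕ Fin n) :
    φ (chartNumerator t N v j) = chartNumerator t N (φ ∘ v) j := by
  rcases j with j | j <;> simp [chartNumerator, map_smul]

theorem chartPoint_inl_zero (s : A) (y : Fin n ⊕ Fin n → A) : chartPoint t N s y (.inl 0) = 1 := by
  simp [chartPoint, linePoint]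

theorem chartPoint_inr_zero (s : A) (y : Fin n ⊕ Fin n → A) : chartPoint t N s y (.inr 0) = s := by
  simp [chartPoint, linePoint]

theorem chartNumerator_chartPoint (s : A) (y : Fin n ⊕ Fin n → A) (j : Fin n ⊕ Fin n) :
    chartNumerator t N (chartPoint t N s y) j = Polynomial.aeval s (quadratic t N) * y j := by
  rcases j with j | j <;>
  · simp only [chartNumerator, chartPoint, linePoint, aeval_quadratic, Algebra.smul_def,
      Sum.elim_inl, Sum.elim_inr, Pi.add_apply, Pi.sub_apply, Pi.mul_apply, Pi.algebraMap_apply,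
      Algebra.algebraMap_self, RingHom.id_apply, Fin.cons_zero, Fin.cons_succ,
      Function.comp_apply]
    ring

theorem chartPoint_mem {E : Type*} [Field E] [Algebra k E] {M : IntermediateField k E} {s : E}
    {y : Fin n ⊕ Fin n → E} (hs : s ∈ M) (hy : ∀ j, y j ∈ M) (j : Fin (n + 1) ⊕ Fin (n + 1)) :
    chartPoint t N s y j ∈ M := by
  have := map_chartPoint t N M.val ⟨s, hs⟩ (fun j => ⟨y j, hy j⟩) j
  exact this ▸ Subtype.coe_prop _

variable {t N}

theorem chartPoint_eq_of_chartNumerator_eq {E : Type*} [Field E] [Algebra k E]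
    {v : Fin (n + 1) ⊕ Fin (n + 1) → E} (hv : v (.inl 0) = 1) {y : Fin n ⊕ Fin n → E}
    (hD : Polynomial.aeval (v (.inr 0)) (quadratic t N) ≠ 0)
    (hy : ∀ j, chartNumerator t N v j = Polynomial.aeval (v (.inr 0)) (quadratic t N) * y j) :
    chartPoint t N (v (.inr 0)) y = v := by
  funext j
  refine mul_left_cancel₀ hD ?_
  rw [aeval_quadratic] at hy ⊢
  simp only [chartNumerator, Algebra.smul_def, Sum.forall, Sum.elim_inl, Sum.elim_inr] at hy
  obtain ⟨hp, hq⟩ := hy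
  rcases j with j | j <;> cases j using Fin.cases with
  | zero => simp [chartPoint, linePoint, hv]
  | succ j =>
    simp only [chartPoint, linePoint, Sum.elim_inl, Sum.elim_inr, Pi.add_apply, Pi.sub_apply,
      Pi.smul_apply, Fin.cons_succ, Function.comp_apply]
    simp only [smul_eq_mul, Algebra.smul_def]
    first
    | linear_combination -hp j - v (.inr 0) * hq j
    | linear_combination -v (.inr 0) * hp j -
        (v (.inr 0) * algebraMap k E t - algebraMap k E N) * hq j

/-- The lines of `chartPoint` meet the cubic `G = 0` in a pair of conjugate points, cut out by
`s² - ts + N`, and a third point with parameter `-β / α`. -/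
def IsResidual {k : Type u} [Field k] {n : ℕ} (t N : k)
    (G : MvPolynomial (Fin (n + 1) ⊕ Fin (n + 1)) k) (α β : MvPolynomial (Fin n ⊕ Fin n) k) :
    Prop :=
  ∀ ⦃A : Type u⦄ [CommRing A] [Algebra k A] (s : A) (y : Fin n ⊕ Fin n → A),
    aeval (chartPoint t N s y) G =
      Polynomial.aeval s (quadratic t N) * (aeval y α * s + aeval y β)

theorem exists_isResidual {k : Type u} {K : Type*} [Field k] [Infinite k] [Field K] [Algebra k K]
    {n : ℕ} {t N : k} {δ : K} (hδ : δ ∉ Set.range (algebraMap k K))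
    (hroot : Polynomial.aeval δ (quadratic t N) = 0)
    {G : MvPolynomial (Fin (n + 1) ⊕ Fin (n + 1)) k} (hG : G.IsHomogeneous 3)
    (hGδ : ∀ c : Fin (n + 1) → K, aeval (Sum.elim c (δ • c)) G = 0)
    (hX : ¬ X (.inl 0) ∣ G) : ∃ α β, α ≠ 0 ∧ IsResidual t N G α β := by
  let p : Fin (n + 1) → MvPolynomial (Fin n ⊕ Fin n) k := Fin.cons 1 (X ∘ Sum.inl)
  let q : Fin (n + 1) → MvPolynomial (Fin n ⊕ Fin n) k := Fin.cons 0 (X ∘ Sum.inr)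
  obtain ⟨β, hβ⟩ := exists_residual hδ hroot hG hGδ p q
  refine ⟨aeval (Sum.elim q (p + t • q)) G, β, fun hα => ?_, fun A _ _ s y => ?_⟩
  · obtain ⟨v, hv0, hv1, hv⟩ :=
      exists_aeval_ne_zero_of_not_X_dvd (j := .inr 0) hG (by simp) hX
    let w : Fin n ⊕ Fin n → k :=
      Sum.elim (fun j => v (.inr j.succ) - t * v (.inl j.succ)) fun j => v (.inl j.succ)
    have hvw : (fun j => aeval w (Sum.elim q (p + t • q) j)) = v := by
      funext j
      rcases j with j | j <;> cases j using Fin.cases <;> simp [p, q, w, hv0, hv1]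
    apply hv
    rw [← hvw, ← comp_aeval_apply, hα, map_zero]
  · have hX : aeval y ∘ (X : _ → MvPolynomial _ k) = y := funext (aeval_X y)
    rw [← hβ s y, Fin.comp_cons, Fin.comp_cons, map_one, map_zero, ← Function.comp_assoc,
      ← Function.comp_assoc, hX]
    rfl

end LineCoordinates

section Birational

variable {k S E : Type u} [Field k] [CommRing S] [Algebra k S] {n : ℕ} {t N : k}
  {G : MvPolynomial (Fin (n + 1) ⊕ Fin (n + 1)) k} {v : Fin (n + 1) ⊕ Fin (n + 1) → S}
  {α β : MvPolynomial (Fin n ⊕ Fin n) k}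

theorem IsResidual.exists_algHom (h : IsResidual t N G α β) (hα : α ≠ 0)
    (hv : IsUniversalPoint G (.inl 0) v) (hroot : ∀ a, ¬ (quadratic t N).IsRoot a) :
    ∃ φ : S →ₐ[k] FractionRing (MvPolynomial (Fin n ⊕ Fin n) k),
      φ (Polynomial.aeval (v (.inr 0)) (quadratic t N)) ≠ 0 ∧
      ∀ j, φ (chartNumerator t N v j) =
        φ (Polynomial.aeval (v (.inr 0)) (quadratic t N)) *
          algebraMap (MvPolynomial (Fin n ⊕ Fin n) k) _ (X j) := by
  let L := FractionRing (MvPolynomial (Fin n ⊕ Fin n) k)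
  let z : Fin n ⊕ Fin n → L :=
    fun j => algebraMap (MvPolynomial (Fin n ⊕ Fin n) k) L (X j)
  have hz (P : MvPolynomial (Fin n ⊕ Fin n) k) : aeval z P = algebraMap _ L P := by
    rw [← aeval_X_left_apply P, ← aeval_algebraMap_apply, aeval_X_left_apply]
    rfl
  have hα' : aeval z α ≠ 0 := by simpa [hz] using hα
  let s := -aeval z β / aeval z α
  obtain ⟨φ, hφ⟩ := hv.exists_lift (chartPoint t N s z) (chartPoint_inl_zero t N s z) (by
    rw [h, mul_div_cancel₀ _ hα', neg_add_cancel, mul_zero])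
  have hD : φ (Polynomial.aeval (v (.inr 0)) (quadratic t N)) =
      Polynomial.aeval s (quadratic t N) := by
    rw [← Polynomial.aeval_algHom_apply, hφ, chartPoint_inr_zero]
  refine ⟨φ, ?_, fun j => ?_⟩
  · rw [hD]
    exact aeval_ne_zero_of_monic_of_not_isRoot (monic_quadratic t N) hroot s
  · rw [map_chartNumerator, show φ ∘ v = _ from funext hφ, chartNumerator_chartPoint, hD]

variable [Field E] [Algebra k E] [Algebra S E] [IsScalarTower k S E] [IsFractionRing S E]

theorem IsResidual.adjoin_eq_top (h : IsResidual t N G α β)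
    (hα : α ≠ 0) (hv : IsUniversalPoint G (.inl 0) v) {y : Fin n ⊕ Fin n → E}
    (hy : AlgebraicIndependent k y)
    (hD : algebraMap S E (Polynomial.aeval (v (.inr 0)) (quadratic t N)) ≠ 0)
    (hvy : ∀ j, algebraMap S E (chartNumerator t N v j) =
      algebraMap S E (Polynomial.aeval (v (.inr 0)) (quadratic t N)) * y j) :
    IntermediateField.adjoin k (Set.range y) = ⊤ := by
  let ψ : S →ₐ[k] E := IsScalarTower.toAlgHom k S E
  let M := IntermediateField.adjoin k (Set.range y)
  have hyM (j) : y j ∈ M := IntermediateField.subset_adjoin k _ ⟨j, rfl⟩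
  have haevalM (P : MvPolynomial (Fin n ⊕ Fin n) k) : aeval y P ∈ M := by
    rw [show y = fun j => M.val ⟨y j, hyM j⟩ from rfl, ← comp_aeval_apply]
    exact Subtype.coe_prop _
  have hDψ : algebraMap S E (Polynomial.aeval (v (.inr 0)) (quadratic t N)) =
      Polynomial.aeval ((ψ ∘ v) (.inr 0)) (quadratic t N) :=
    (Polynomial.aeval_algHom_apply ψ _ _).symm
  rw [hDψ] at hD
  have hpoint : chartPoint t N ((ψ ∘ v) (.inr 0)) y = ψ ∘ v :=
    chartPoint_eq_of_chartNumerator_eq (by simp [hv.apply_eq_one]) hD fun j => by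
      rw [← map_chartNumerator, ← hDψ]
      exact hvy j
  have hline : aeval y α * (ψ ∘ v) (.inr 0) + aeval y β = 0 := by
    refine (mul_eq_zero.mp ?_).resolve_left hD
    rw [← h, hpoint, ← map_zero ψ, ← hv.aeval_eq_zero, comp_aeval_apply]
    rfl
  have hα' : aeval y α ≠ 0 := fun h0 => hα (hy.eq_zero_of_aeval_eq_zero _ h0)
  have hs : (ψ ∘ v) (.inr 0) ∈ M := by
    rw [eq_div_of_mul_eq hα' ((mul_comm _ _).trans (eq_neg_of_add_eq_zero_left hline))]
    exact div_mem (neg_mem (haevalM β)) (haevalM α)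
  refine intermediateField_eq_top hv.surjective_aeval fun j => ?_
  change (ψ ∘ v) j ∈ M
  rw [← hpoint]
  exact chartPoint_mem t N hs hyM j

theorem IsResidual.nonempty_algEquiv (h : IsResidual t N G α β) (hα : α ≠ 0)
    (hv : IsUniversalPoint G (.inl 0) v) (hroot : ∀ a, ¬ (quadratic t N).IsRoot a) :
    Nonempty (E ≃ₐ[k] FractionRing (MvPolynomial (Fin n ⊕ Fin n) k)) := by
  have : FaithfulSMul S E := (faithfulSMul_iff_algebraMap_injective S E).mpr
    (IsFractionRing.injective S E)
  obtain ⟨φ, hφD, hφ⟩ := h.exists_algHom hα hv hroot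
  have hD : algebraMap S E (Polynomial.aeval (v (.inr 0)) (quadratic t N)) ≠ 0 := by
    rw [ne_eq, FaithfulSMul.algebraMap_eq_zero_iff]
    exact fun hD => hφD (by rw [hD, map_zero])
  have hX : AlgebraicIndependent k fun j : Fin n ⊕ Fin n =>
      algebraMap (MvPolynomial _ k) (FractionRing (MvPolynomial (Fin n ⊕ Fin n) k)) (X j) :=
    (algebraicIndependent_X _ k).map' (f := IsScalarTower.toAlgHom k _ _)
      (IsFractionRing.injective _ _)
  have hy := algebraicIndependent_div (E := E) φ hφD hX hφ
  exact nonempty_algEquiv_fractionRing_mvPolynomial hy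
    (h.adjoin_eq_top hα hv hy hD fun j => (mul_div_cancel₀ _ hD).symm)

end Birational

theorem exists_chart_of_skew_conjugate_planes {k : Type u} {K τ : Type*} [Field k] [Infinite k]
    [Field K] [Algebra k K] (hquad : Module.finrank k K = 2) (σ : K ≃ₐ[k] K) {n : ℕ}
    [Fintype τ] (hτ : Fintype.card τ = 2 * n + 2) (i₀ : τ) {F : MvPolynomial τ k}
    (hF : F.IsHomogeneous 3) (hirr : Irreducible F) {H : Submodule K (τ → K)}
    (hd : Module.finrank K H = n + 1) (hskew : ∀ x ∈ H, (fun i => σ (x i)) ∈ H → x = 0)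
    (hX : ∀ x ∈ H, aeval x F = 0) :
    ∃ (e : MvPolynomial τ k ≃ₐ[k] MvPolynomial (Fin (n + 1) ⊕ Fin (n + 1)) k) (t N : k) (α β : _),
      e (X i₀) = X (.inl 0) ∧ (∀ a, ¬ (quadratic t N).IsRoot a) ∧ α ≠ 0 ∧
      IsResidual t N (e F) α β := by
  obtain ⟨δ, hδ⟩ := exists_notMem_range_algebraMap (k := k) (K := K) (by omega)
  obtain ⟨t, N, -, hroot, -⟩ := exists_quadratic_coordinate hquad hδ
  obtain ⟨B, hB, hBH⟩ := exists_basis_of_skew_conjugate (ι := Fin (n + 1)) hquad σ hδ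
    (by simpa using hd) (by rw [Nat.card_eq_fintype_card, hτ, Fintype.card_fin]; ring) hskew i₀ 0
  let e := basisSubstitution B
  have heX : e (X i₀) = X (.inl 0) := by simp [e, basisSubstitution_X, hB]
  have heF : ¬ X (.inl 0) ∣ e F := by
    rw [← heX, map_dvd_iff]
    intro h
    exact not_dvd_X (by norm_num) hF i₀ (X_prime.irreducible.dvd_symm hirr h)
  obtain ⟨α, β, hα, hres⟩ := exists_isResidual hδ hroot (isHomogeneous_basisSubstitution B hF)
    (fun c => by rw [aeval_basisSubstitution, hX _ (hBH c)]) heF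
  exact ⟨e, t, N, α, β, heX, not_isRoot_quadratic hδ hroot, hα, hres⟩

theorem rational_of_skew_conjugate_planes_general {k : Type} {K : Type*} [Field k] [Infinite k]
    [Field K] [Algebra k K] (hquad : Module.finrank k K = 2) (σ : K ≃ₐ[k] K) (n : ℕ)
    (F : MvPolynomial (Fin (2 * n + 2)) k) (hF : F.IsHomogeneous 3) (hirr : Irreducible F)
    (H : Submodule K (Fin (2 * n + 2) → K)) (hd : Module.finrank K H = n + 1)
    (hskew : ∀ x ∈ H, (fun i => σ (x i)) ∈ H → x = 0) (hX : ∀ x ∈ H, aeval x F = 0) :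
    IsRationalHypersurface k (2 * n + 1) F := by
  have hprime : (Ideal.span {dehom k (2 * n + 1) 0 F}).IsPrime :=
    isPrime_span_dehom_zero (by norm_num) hF hirr
  obtain ⟨e, t, N, α, β, heX, hroot, hα, hres⟩ :=
    exists_chart_of_skew_conjugate_planes hquad σ (by simp) 0 hF hirr hd hskew hX
  obtain ⟨f⟩ := hres.nonempty_algEquiv
    (E := FractionRing (_ ⧸ Ideal.span {dehom k (2 * n + 1) 0 F})) hα
    ((isUniversalPoint_mk F).map_algEquiv e heX) hroot
  obtain ⟨g⟩ := nonempty_algEquiv_fractionRing_of_equiv k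
    (finSumFinEquiv.trans (finCongr (show n + n = 2 * n + 1 - 1 by omega)))
  exact ⟨0, ⟨f.trans g⟩⟩

/-- Let `k` be a field of characteristic zero and `X ⊂ P^{2n+1}` a smooth
cubic hypersurface over `k`. If `X` contains two skew `n`-planes, defined over a
quadratic extension `K` of `k` and conjugate over `k` (i.e. exchanged by the nontrivial
element `σ` of the Galois group of `K/k`), then `X` is rational over `k`.

The `n`-planes are given by their affine cones `H₁, H₂`, which are `(n+1)`-dimensional
`K`-linear subspaces of `K^{2n+2}`; skewness means `H₁ ⊓ H₂ = ⊥`, conjugacy means `σ`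
(applied coordinatewise) carries `H₁` onto `H₂`, and containment in `X` means the cubic
form `F` vanishes on them. Smoothness of `X` is checked over an algebraic closure. -/
theorem rational_of_skew_conjugate_planes (k K : Type) [Field k] [CharZero k]
    [Field K] [Algebra k K] (hquad : Module.finrank k K = 2)
    (σ : K ≃ₐ[k] K) (hσ : σ ≠ AlgEquiv.refl) (n : ℕ) (hn : 1 ≤ n)
    (F : MvPolynomial (Fin (2 * n + 2)) k) (hF : F.IsHomogeneous 3)
    (hsmooth : ∀ v : Fin (2 * n + 2) → AlgebraicClosure k, v ≠ 0 →
      eval v (map (algebraMap k (AlgebraicClosure k)) F) = 0 →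
      ∃ i, eval v (pderiv i (map (algebraMap k (AlgebraicClosure k)) F)) ≠ 0)
    (H₁ H₂ : Submodule K (Fin (2 * n + 2) → K))
    (hd₁ : Module.finrank K H₁ = n + 1) (hd₂ : Module.finrank K H₂ = n + 1)
    (hskew : H₁ ⊓ H₂ = ⊥)
    (hconj : ∀ x : Fin (2 * n + 2) → K, x ∈ H₁ ↔ (fun i => σ (x i)) ∈ H₂)
    (hX₁ : ∀ x ∈ H₁, aeval x F = 0) (hX₂ : ∀ x ∈ H₂, aeval x F = 0) :
    IsRationalHypersurface k (2 * n + 1) F := by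
  have hirr : Irreducible F := by
    refine irreducible_of_smooth (by rw [Fintype.card_fin]; omega) (AlgebraicClosure k)
      three_ne_zero hF fun v hv hFv => ?_
    simpa only [pderiv_map, eval_map, ← aeval_def] using
      hsmooth v hv (by rwa [eval_map, ← aeval_def])
  refine rational_of_skew_conjugate_planes_general hquad σ n F hF hirr H₁ hd₁
    (fun x hx hσx => ?_) hX₁
  have hσx₂ : (fun i => σ (x i)) ∈ H₁ ⊓ H₂ := ⟨hσx, (hconj x).mp hx⟩
  rw [hskew, Submodule.mem_bot] at hσx₂
  exact funext fun i => σ.map_eq_zero_iff.mp (congrFun hσx₂ i)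
end

section
/- Let k be a field of characteristic ≠ 3. For every n ≥ 1, the Fermat cubic hypersurface X^{2n} = {x₀³ + ⋯ + x_{2n+1}³ = 0} ⊂ P^{2n+1} is rational over k, i.e. the function field k(X^{2n}) is isomorphic as a k-algebra to k(x₁, …, x_{2n}). -/
open MvPolynomial

/-!
Pair the coordinates as `(t, 1), (x₁, y₁), …, (xₙ, yₙ)`. Let `ω` be a primitive cube root of unity
and `N(a + bω) = a² - ab + b²`, so that `x³ + y³ = N(x + yω)(x + y)`. The equations
`xᵢ + yᵢω = (aᵢ + bᵢω)(t + ω)` define rational functions `aᵢ`, `bᵢ` over `k` with denominator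
`N(t + ω)`. Every summand `t³ + 1`, `xᵢ³ + yᵢ³` of the affine equation is divisible by `N(t + ω)`,
and the quotient `t + 1 + ∑ᵢ N(aᵢ + bᵢω)(xᵢ + yᵢ)` is linear in `t` once `xᵢ` and `yᵢ` are
expressed through `aᵢ`, `bᵢ` and `t`. The coefficient of `t` does not vanish identically, because
it is `1` at the point `t = -1`, `x = y = 0`, where `N(t + ω) = 3` is invertible. Hence the `2n`
functions `aᵢ`, `bᵢ` generate the function field, and since its transcendence degree is `2n` they
are algebraically independent.

Geometrically, the cubic contains two disjoint linear subspaces of dimension `n`, interchanged by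
`ω ↦ ω²`, and a general point of it lies on a unique line meeting both.
-/

section Irreducibility

theorem irreducible_X_pow_add_C_of_squarefree {R : Type*} [CommRing R] [IsDomain R]
    [UniqueFactorizationMonoid R] {g : R} (hg : Squarefree g) (hu : ¬IsUnit g) {d : ℕ}
    (hd : d ≠ 0) : Irreducible (Polynomial.X ^ d + Polynomial.C g) := by
  obtain ⟨π, hπ, hπg⟩ := WfDvdMonoid.exists_irreducible_factor hu hg.ne_zero
  have hdeg := Polynomial.degree_X_pow_add_C (Nat.pos_of_ne_zero hd) g
  have hmonic := Polynomial.monic_X_pow_add_C g hd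
  refine Polynomial.irreducible_of_eisenstein_criterion (P := Ideal.span {π})
    ((Ideal.span_singleton_prime hπ.ne_zero).2 hπ.prime) ?_ (fun j hj => ?_) ?_ ?_
    hmonic.isPrimitive
  · rw [hmonic.leadingCoeff, Ideal.mem_span_singleton]
    exact fun h => hπ.not_isUnit (isUnit_of_dvd_one h)
  · rw [hdeg, Nat.cast_lt] at hj
    rw [Ideal.mem_span_singleton, Polynomial.coeff_add, Polynomial.coeff_X_pow, if_neg hj.ne,
      zero_add, Polynomial.coeff_C]
    split_ifs
    exacts [hπg, dvd_zero π]
  · rw [hdeg]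
    exact_mod_cast Nat.pos_of_ne_zero hd
  · rw [Ideal.span_singleton_pow, Ideal.mem_span_singleton, Polynomial.coeff_zero_eq_eval_zero]
    simpa [hd, sq] using fun h => hπ.not_isUnit (hg π h)

/-- The equation `∑ Xᵢ ^ d + 1` of the affine chart `{x = 1}` of the Fermat hypersurface of
degree `d`, the homogeneous coordinates being those in `σ` together with `x`. -/
noncomputable abbrev affineFermat (σ k : Type*) [Fintype σ] [CommRing k] (d : ℕ) :
    MvPolynomial σ k :=
  ∑ i, X i ^ d + 1

namespace affineFermat

variable {σ τ k : Type*} [Fintype σ] [Fintype τ]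

theorem renameEquiv_apply [CommRing k] (e : σ ≃ τ) (d : ℕ) :
    renameEquiv k e (affineFermat σ k d) = affineFermat τ k d := by
  simp [affineFermat, ← Equiv.sum_comp e]

theorem finSuccEquiv_apply [CommRing k] (m d : ℕ) :
    finSuccEquiv k m (affineFermat (Fin (m + 1)) k d) =
      Polynomial.X ^ d + Polynomial.C (affineFermat (Fin m) k d) := by
  simp [affineFermat, Fin.sum_univ_succ, finSuccEquiv_X_zero, finSuccEquiv_X_succ, add_assoc]

theorem aeval_of_equiv_option_sum {ι A : Type*} [Fintype ι] [CommRing k] [CommRing A] [Algebra k A]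
    (e : Option (ι ⊕ ι) ≃ σ) (z : σ → A) (d : ℕ) :
    aeval z (affineFermat σ k d) = z (e none) ^ d +
      ∑ i, (z (e (some (.inl i))) ^ d + z (e (some (.inr i))) ^ d) + 1 := by
  simp [affineFermat, ← Equiv.sum_comp e, Fintype.sum_option, Finset.sum_add_distrib]

theorem aeval_single_neg_one [CommRing k] [DecidableEq σ] {d : ℕ} (hd : Odd d) (i : σ) :
    aeval (Pi.single i (-1 : k)) (affineFermat σ k d) = 0 := by
  simp [affineFermat, Pi.single_apply, ite_pow, hd.neg_one_pow, hd.pos.ne']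

theorem coeff_single [CommRing k] {d : ℕ} (hd : d ≠ 0) (i : σ) :
    coeff (Finsupp.single i d) (affineFermat σ k d) = 1 := by
  classical
  simp [affineFermat, coeff_sum, coeff_X_pow, coeff_one, Finsupp.single_left_inj hd, hd,
    eq_comm (a := (0 : σ →₀ ℕ))]

theorem degreeOf_ne_zero [CommRing k] [Nontrivial k] {d : ℕ} (hd : d ≠ 0) (i : σ) :
    (affineFermat σ k d).degreeOf i ≠ 0 := by
  have hmem : Finsupp.single i d ∈ (affineFermat σ k d).support := by
    rw [mem_support_iff, coeff_single hd]
    exact one_ne_zero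
  have hle : d ≤ (affineFermat σ k d).degreeOf i := by simpa using monomial_le_degreeOf i hmem
  exact Nat.ne_zero_of_lt ((Nat.pos_of_ne_zero hd).trans_le hle)

theorem not_isUnit_of_fin_succ [CommRing k] [IsDomain k] (m : ℕ) {d : ℕ} (hd : d ≠ 0) :
    ¬IsUnit (affineFermat (Fin (m + 1)) k d) := by
  rw [← MulEquiv.isUnit_map (finSuccEquiv k m), finSuccEquiv_apply]
  refine Polynomial.not_isUnit_of_natDegree_pos _ ?_
  rw [Polynomial.natDegree_X_pow_add_C]
  exact Nat.pos_of_ne_zero hd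

variable [Field k]

theorem squarefree_of_fin_one {d : ℕ} (hd : (d : k) ≠ 0) :
    Squarefree (affineFermat (Fin 1) k d) := by
  have hsep : (Polynomial.X ^ d + Polynomial.C (affineFermat (Fin 0) k d)).Separable := by
    have hunit : IsUnit (d : MvPolynomial (Fin 0) k) := by
      simpa using (IsUnit.mk0 _ hd).map (C (R := k) (σ := Fin 0))
    simpa [affineFermat] using Polynomial.separable_X_pow_sub_C_unit (-1) hunit
  intro p hp
  rw [← MulEquiv.isUnit_map (finSuccEquiv k 0)]
  refine hsep.squarefree _ ?_
  rw [← finSuccEquiv_apply, ← map_mul]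
  exact map_dvd _ hp

theorem irreducible_of_fin {d : ℕ} (hd : (d : k) ≠ 0) (m : ℕ) :
    Irreducible (affineFermat (Fin (m + 2)) k d) := by
  have hd0 : d ≠ 0 := fun h => hd (by rw [h, Nat.cast_zero])
  have hsq : Squarefree (affineFermat (Fin (m + 1)) k d) := by
    cases m with
    | zero => exact squarefree_of_fin_one hd
    | succ m => exact (irreducible_of_fin hd m).squarefree
  rw [← MulEquiv.irreducible_iff (finSuccEquiv k (m + 1)), finSuccEquiv_apply]
  exact irreducible_X_pow_add_C_of_squarefree hsq (not_isUnit_of_fin_succ m hd0) hd0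

theorem irreducible [Nontrivial σ] {d : ℕ} (hd : (d : k) ≠ 0) :
    Irreducible (affineFermat σ k d) := by
  obtain ⟨m, hm⟩ := Nat.exists_eq_add_of_le' (Fintype.one_lt_card (α := σ))
  rw [← MulEquiv.irreducible_iff (renameEquiv k (Fintype.equivFinOfCardEq hm)),
    renameEquiv_apply]
  exact irreducible_of_fin hd m

end affineFermat

end Irreducibility

section GenericZero

variable {k F σ τ : Type*} [Field k] [Field F] [Algebra k F]

theorem isFractionRing_adjoin_of_adjoin_eq_top {S : Set F}
    (hS : IntermediateField.adjoin k S = ⊤) : IsFractionRing (Algebra.adjoin k S) F :=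
  .of_field _ _ fun z => by
    obtain ⟨p, hp, q, hq, h⟩ :=
      IntermediateField.mem_adjoin_iff_div.mp (hS ▸ IntermediateField.mem_top : z ∈ _)
    exact ⟨⟨p, hp⟩, ⟨q, hq⟩, h⟩

theorem nonempty_algEquiv_fractionRing_mvPolynomial_s9 [Finite τ] {x y : τ → F}
    (hx : AlgebraicIndependent k x) (hy : IntermediateField.adjoin k (Set.range y) = ⊤) :
    Nonempty (F ≃ₐ[k] FractionRing (MvPolynomial τ k)) := by
  have := isFractionRing_adjoin_of_adjoin_eq_top hy
  have : Algebra.IsAlgebraic (Algebra.adjoin k (Set.range y)) F :=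
    IsLocalization.isAlgebraic _ (nonZeroDivisors _)
  have hy_indep : AlgebraicIndependent k y :=
    (Algebra.IsAlgebraic.isTranscendenceBasis_of_lift_le_trdeg_of_finite k y
      hx.lift_cardinalMk_le_trdeg).1
  exact ⟨(hy_indep.aevalEquivField.trans
    ((IntermediateField.equivOfEq hy).trans IntermediateField.topEquiv)).symm⟩

/-- `z` is a generic zero, with values in the field `F`, of the hypersurface `f = 0`: the
coordinates `z i` satisfy no relations other than the multiples of `f`, and they generate `F`.
This presents `F` as the function field of the hypersurface. -/
structure IsGenericZero (f : MvPolynomial σ k) (z : σ → F) : Prop where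
  aeval_eq_zero_iff (p : MvPolynomial σ k) : aeval z p = 0 ↔ f ∣ p
  adjoin_range : IntermediateField.adjoin k (Set.range z) = ⊤

namespace IsGenericZero

variable {f : MvPolynomial σ k} {z : σ → F}

theorem of_isFractionRing [Algebra (MvPolynomial σ k ⧸ Ideal.span {f}) F]
    [IsScalarTower k (MvPolynomial σ k ⧸ Ideal.span {f}) F]
    [IsFractionRing (MvPolynomial σ k ⧸ Ideal.span {f}) F] :
    IsGenericZero f fun i : σ =>
      algebraMap (MvPolynomial σ k ⧸ Ideal.span {f}) F (Ideal.Quotient.mk _ (X i)) := by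
  set Q := MvPolynomial σ k ⧸ Ideal.span {f}
  set z : σ → F := fun i => algebraMap Q F (Ideal.Quotient.mk _ (X i))
  have aeval_eq (p : MvPolynomial σ k) : aeval z p = algebraMap Q F (Ideal.Quotient.mk _ p) := by
    have : aeval z =
        (IsScalarTower.toAlgHom k Q F).comp (Ideal.Quotient.mkₐ k (Ideal.span {f})) := by
      ext i; simp [z, Q]
    exact DFunLike.congr_fun this p
  refine ⟨fun p => ?_, eq_top_iff.2 fun w _ => ?_⟩
  · rw [aeval_eq, FaithfulSMul.algebraMap_eq_zero_iff, Ideal.Quotient.eq_zero_iff_mem,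
      Ideal.mem_span_singleton]
  · have mk_mem (q : Q) : algebraMap Q F q ∈ IntermediateField.adjoin k (Set.range z) := by
      obtain ⟨p, rfl⟩ := Ideal.Quotient.mk_surjective q
      rw [← aeval_eq]
      exact IntermediateField.algebra_adjoin_le_adjoin k _
        (Algebra.adjoin_range_eq_range_aeval k z ▸ ⟨p, rfl⟩)
    obtain ⟨p, q, -, rfl⟩ := IsFractionRing.div_surjective Q w
    exact div_mem (mk_mem p) (mk_mem q)

theorem aeval_eq_zero_of_aeval_eq_zero (hz : IsGenericZero f z) {A : Type*} [CommRing A]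
    [Algebra k A] {w : σ → A} (hw : aeval w f = 0) {p : MvPolynomial σ k} (hp : aeval z p = 0) :
    aeval w p = 0 := by
  obtain ⟨q, rfl⟩ := (hz.aeval_eq_zero_iff p).1 hp
  rw [map_mul, hw, zero_mul]

theorem algebraicIndependent (hz : IsGenericZero f z) {i : σ} (hf : f.degreeOf i ≠ 0)
    {u : τ → σ} (hu : Function.Injective u) (hi : i ∉ Set.range u) :
    AlgebraicIndependent k (z ∘ u) := by
  rw [algebraicIndependent_iff]
  intro p hp
  by_contra hp0
  rw [← aeval_rename, hz.aeval_eq_zero_iff] at hp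
  obtain ⟨q, hq⟩ := hp
  have hrename : rename u p ≠ 0 := (map_ne_zero_iff _ (rename_injective u hu)).2 hp0
  have hdeg : (rename u p).degreeOf i = 0 := by
    classical
    rw [degreeOf_def, Multiset.count_eq_zero, degrees_rename_of_injective hu, Multiset.mem_map]
    rintro ⟨j, -, rfl⟩
    exact hi ⟨j, rfl⟩
  rw [hq, degreeOf_mul_eq (left_ne_zero_of_mul (hq ▸ hrename))
    (right_ne_zero_of_mul (hq ▸ hrename))] at hdeg
  exact hf (Nat.eq_zero_of_add_eq_zero_right hdeg)

end IsGenericZero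

end GenericZero

section EisensteinNorm

/-- The norm `a² - ab + b²` of `a + bω`, where `ω` is a primitive cube root of unity. -/
def eisensteinNorm {A : Type*} [CommRing A] (a b : A) : A := a ^ 2 - a * b + b ^ 2

/-- The coefficient of `t` in the linear equation that the Fermat cubic becomes after division by
`N(t + ω)`, in the coordinates given by `xᵢ + yᵢω = (aᵢ + bᵢω)(t + ω)`. -/
def residualSlope {A ι : Type*} [CommRing A] [Fintype ι] (a b : ι → A) : A :=
  1 + ∑ i, eisensteinNorm (a i) (b i) * (a i + b i)

/-- The constant term of the linear equation whose leading coefficient is `residualSlope a b`. -/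
def residualConst {A ι : Type*} [CommRing A] [Fintype ι] (a b : ι → A) : A :=
  1 + ∑ i, eisensteinNorm (a i) (b i) * (a i - 2 * b i)

theorem map_eisensteinNorm {A B Φ : Type*} [CommRing A] [CommRing B] [FunLike Φ A B]
    [RingHomClass Φ A B] (φ : Φ) (a b : A) :
    φ (eisensteinNorm a b) = eisensteinNorm (φ a) (φ b) := by
  simp [eisensteinNorm]

section CommRing

variable {A ι : Type*} [CommRing A] [Fintype ι] {t : A} {x y a b : ι → A}

theorem sum_cubes_eq_eisensteinNorm_mul (hx : ∀ i, x i = a i * t - b i)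
    (hy : ∀ i, y i = a i + b i * t - b i) :
    t ^ 3 + ∑ i, (x i ^ 3 + y i ^ 3) + 1 =
      eisensteinNorm t 1 * (residualSlope a b * t + residualConst a b) := by
  have summand (i : ι) : x i ^ 3 + y i ^ 3 =
      eisensteinNorm t 1 * (eisensteinNorm (a i) (b i) * (a i + b i) * t +
        eisensteinNorm (a i) (b i) * (a i - 2 * b i)) := by
    simp only [hx, hy, eisensteinNorm]
    ring
  have constants : t ^ 3 + 1 = eisensteinNorm t 1 * (t + 1) := by
    simp only [eisensteinNorm]
    ring
  simp only [summand, residualSlope, residualConst, ← Finset.mul_sum, Finset.sum_add_distrib,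
    ← Finset.sum_mul]
  linear_combination constants

theorem eisensteinNorm_sq_mul_residualSlope (hx : ∀ i, x i = a i * t - b i)
    (hy : ∀ i, y i = a i + b i * t - b i) :
    eisensteinNorm t 1 ^ 2 * residualSlope a b = eisensteinNorm t 1 ^ 2 +
      ∑ i, eisensteinNorm (x i) (y i) * ((x i + y i) * t + y i - 2 * x i) := by
  have summand (i : ι) : eisensteinNorm t 1 ^ 2 * (eisensteinNorm (a i) (b i) * (a i + b i)) =
      eisensteinNorm (x i) (y i) * ((x i + y i) * t + y i - 2 * x i) := by
    simp only [hx, hy, eisensteinNorm]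
    ring
  simp only [residualSlope, mul_add, mul_one, Finset.mul_sum, ← summand]

end CommRing

theorem exists_eisenstein_quotient {F : Type*} [Field F] {t : F} (ht : eisensteinNorm t 1 ≠ 0)
    (x y : F) : ∃ a b : F, x = a * t - b ∧ y = a + b * t - b := by
  refine ⟨(x * t + y - x) / eisensteinNorm t 1, (y * t - x) / eisensteinNorm t 1, ?_, ?_⟩ <;>
  · field_simp
    simp only [eisensteinNorm]
    ring

theorem mem_of_residualSlope_mul_add_eq_zero {F S ι : Type*} [Field F] [SetLike S F]
    [SubfieldClass S F] [Fintype ι] {L : S} {t : F} {a b : ι → F} (ha : ∀ i, a i ∈ L)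
    (hb : ∀ i, b i ∈ L) (hslope : residualSlope a b ≠ 0)
    (h : residualSlope a b * t + residualConst a b = 0) : t ∈ L := by
  have norm_mem (i : ι) : eisensteinNorm (a i) (b i) ∈ L :=
    add_mem (sub_mem (pow_mem (ha i) 2) (mul_mem (ha i) (hb i))) (pow_mem (hb i) 2)
  have slope_mem : residualSlope a b ∈ L :=
    add_mem (one_mem L) (sum_mem fun i _ => mul_mem (norm_mem i) (add_mem (ha i) (hb i)))
  have const_mem : residualConst a b ∈ L :=
    add_mem (one_mem L) (sum_mem fun i _ => mul_mem (norm_mem i)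
      (sub_mem (ha i) (mul_mem (ofNat_mem L 2) (hb i))))
  have ht : t = -residualConst a b / residualSlope a b := by
    rw [eq_div_iff hslope]
    linear_combination h
  exact ht ▸ div_mem (neg_mem const_mem) slope_mem

end EisensteinNorm

section FermatCubic

variable {k F ι σ τ : Type*} [Field k] [Field F] [Algebra k F] [Fintype σ] [Fintype τ]

namespace IsGenericZero

variable {z : σ → F}

theorem eisensteinNorm_ne_zero (hz : IsGenericZero (affineFermat σ k 3) z) (h3 : (3 : k) ≠ 0)
    (i : σ) : eisensteinNorm (z i) 1 ≠ 0 := by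
  classical
  intro h
  have hspec := hz.aeval_eq_zero_of_aeval_eq_zero
    (affineFermat.aeval_single_neg_one (by decide) i) (p := eisensteinNorm (X i) 1)
    (by rwa [map_eisensteinNorm, aeval_X, map_one])
  rw [map_eisensteinNorm, aeval_X, map_one, Pi.single_eq_same, eisensteinNorm] at hspec
  exact h3 (by linear_combination hspec)

theorem residualSlope_ne_zero [Fintype ι] (hz : IsGenericZero (affineFermat σ k 3) z)
    (h3 : (3 : k) ≠ 0) (e : Option (ι ⊕ ι) ≃ σ) {a b : ι → F}
    (hx : ∀ i, z (e (some (.inl i))) = a i * z (e none) - b i)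
    (hy : ∀ i, z (e (some (.inr i))) = a i + b i * z (e none) - b i) :
    residualSlope a b ≠ 0 := by
  classical
  intro h
  let t : MvPolynomial σ k := X (e none)
  let x (i : ι) : MvPolynomial σ k := X (e (some (.inl i)))
  let y (i : ι) : MvPolynomial σ k := X (e (some (.inr i)))
  have hcleared : aeval z (eisensteinNorm t 1 ^ 2 +
      ∑ i, eisensteinNorm (x i) (y i) * ((x i + y i) * t + y i - 2 * x i)) = 0 := by
    simpa [map_eisensteinNorm, t, x, y, h] using
      (eisensteinNorm_sq_mul_residualSlope hx hy).symm
  have hspec := hz.aeval_eq_zero_of_aeval_eq_zero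
    (affineFermat.aeval_single_neg_one (by decide) (e none)) hcleared
  have hnine : (3 : k) ^ 2 = 0 := by
    have hsum : ∑ i, aeval (Pi.single (e none) (-1 : k))
        (eisensteinNorm (x i) (y i) * ((x i + y i) * t + y i - 2 * x i)) = 0 :=
      Finset.sum_eq_zero fun i _ => by simp [eisensteinNorm, x, y]
    rw [map_add, map_sum, hsum, map_pow, map_eisensteinNorm, aeval_X, map_one, Pi.single_eq_same,
      eisensteinNorm] at hspec
    linear_combination hspec
  exact h3 (pow_eq_zero_iff two_ne_zero |>.1 hnine)

theorem exists_adjoin_range_sumElim_eq_top [Finite ι]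
    (hz : IsGenericZero (affineFermat σ k 3) z) (h3 : (3 : k) ≠ 0) (e : Option (ι ⊕ ι) ≃ σ) :
    ∃ a b : ι → F, IntermediateField.adjoin k (Set.range (Sum.elim a b)) = ⊤ := by
  have := Fintype.ofFinite ι
  have hnorm := hz.eisensteinNorm_ne_zero h3 (e none)
  choose a b hx hy using fun i => exists_eisenstein_quotient hnorm
    (z (e (some (.inl i)))) (z (e (some (.inr i))))
  have hline : residualSlope a b * z (e none) + residualConst a b = 0 := by
    have hcubic := (hz.aeval_eq_zero_iff _).2 dvd_rfl
    rw [affineFermat.aeval_of_equiv_option_sum e, sum_cubes_eq_eisensteinNorm_mul hx hy] at hcubic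
    exact (mul_eq_zero.1 hcubic).resolve_left hnorm
  set L := IntermediateField.adjoin k (Set.range (Sum.elim a b))
  have ha (i : ι) : a i ∈ L := IntermediateField.subset_adjoin k _ ⟨.inl i, rfl⟩
  have hb (i : ι) : b i ∈ L := IntermediateField.subset_adjoin k _ ⟨.inr i, rfl⟩
  have ht : z (e none) ∈ L :=
    mem_of_residualSlope_mul_add_eq_zero ha hb (hz.residualSlope_ne_zero h3 e hx hy) hline
  refine ⟨a, b, top_le_iff.1 ?_⟩
  rw [← hz.adjoin_range, IntermediateField.adjoin_le_iff]
  rintro _ ⟨j, rfl⟩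
  obtain ⟨o, rfl⟩ := e.surjective j
  rcases o with _ | i | i
  · exact ht
  · exact hx i ▸ sub_mem (mul_mem (ha i) ht) (hb i)
  · exact hy i ▸ sub_mem (add_mem (ha i) (mul_mem (hb i) ht)) (hb i)

end IsGenericZero

theorem fermat_cubic_even_dim_rational_general (h3 : ringChar k ≠ 3) [Nonempty τ]
    (hτ : Even (Fintype.card τ)) (hσ : Fintype.card σ = Fintype.card τ + 1) :
    Nonempty (FractionRing (MvPolynomial σ k ⧸ Ideal.span {affineFermat σ k 3}) ≃ₐ[k]
      FractionRing (MvPolynomial τ k)) := by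
  have h3' : ((3 : ℕ) : k) ≠ 0 := mt (CharP.ringChar_of_prime_eq_zero Nat.prime_three) h3
  have : Nontrivial σ := Fintype.one_lt_card_iff_nontrivial.1 <| by
    have := Fintype.card_pos (α := τ)
    omega
  obtain ⟨m, hm⟩ := hτ
  let e : Option τ ≃ σ := Fintype.equivOfCardEq (by simp [hσ])
  let pairing : Fin m ⊕ Fin m ≃ τ := Fintype.equivOfCardEq (by simp [hm])
  have hirr : Irreducible (affineFermat σ k 3) := affineFermat.irreducible h3'
  have : (Ideal.span {affineFermat σ k 3}).IsPrime :=
    (Ideal.span_singleton_prime hirr.ne_zero).2 hirr.prime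
  have hz := IsGenericZero.of_isFractionRing (f := affineFermat σ k 3)
    (F := FractionRing (MvPolynomial σ k ⧸ Ideal.span {affineFermat σ k 3}))
  obtain ⟨a, b, hab⟩ :=
    hz.exists_adjoin_range_sumElim_eq_top h3' ((Equiv.optionCongr pairing).trans e)
  refine nonempty_algEquiv_fractionRing_mvPolynomial_s9 (y := Sum.elim a b ∘ pairing.symm)
    (hz.algebraicIndependent (affineFermat.degreeOf_ne_zero three_ne_zero (e none))
      (e.injective.comp (Option.some_injective τ)) (by simp)) ?_
  rwa [pairing.symm.surjective.range_comp]

end FermatCubic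

/-- Let `k` be a field of characteristic `≠ 3`. For every `n ≥ 1`, the
Fermat cubic hypersurface `X^{2n} = {x₀³ + ⋯ + x_{2n+1}³ = 0} ⊂ P^{2n+1}` is rational
over `k`: the function field `k(X^{2n})` is isomorphic as a `k`-algebra to the purely
transcendental field `k(x₁, …, x_{2n})`.

The function field of `X^{2n}` is the fraction field of the coordinate ring of the affine
chart `{x_{2n+1} = 1}`, namely of `k[x₀, …, x_{2n}]/(x₀³ + ⋯ + x_{2n}³ + 1)`; the field
`k(x₁, …, x_{2n})` is the fraction field of a polynomial ring in `2n` variables. -/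
theorem fermat_cubic_even_dim_rational (k : Type) [Field k] (h3 : ringChar k ≠ 3)
    (n : ℕ) (hn : 1 ≤ n) :
    Nonempty
      ((FractionRing (MvPolynomial (Fin (2 * n + 1)) k ⧸
          Ideal.span {(∑ i : Fin (2 * n + 1), X i ^ 3) + (1 : MvPolynomial (Fin (2 * n + 1)) k)}))
        ≃ₐ[k] FractionRing (MvPolynomial (Fin (2 * n)) k)) :=
  have : NeZero n := ⟨Nat.one_le_iff_ne_zero.1 hn⟩
  fermat_cubic_even_dim_rational_general h3 (by simp) (by simp)
end

section
/- Let n ≥ 2 and let Ā = u₀³ + Σ_{i=0}^{n-1}(u_{2i+1}³ + 3u_{2i+1}²u_{2i+2} + 3u_{2i+1}u_{2i+2}² + 9u_{2i+2}³) and B̄ = u₀³ + Σ_{i=0}^{n-1}(u_{2i+1}³ - u_{2i+1}²u_{2i+2} + 3u_{2i+1}u_{2i+2}² - 3u_{2i+2}³). Then the complete intersection Y^{2n-2} = {Ā = B̄ = 0} ⊂ P^{2n} is irreducible. -/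
open MvPolynomial

/-- The variable `u_{2i+1}` of `k[u₀, …, u_{2n}]`, for `i = 0, …, n-1`. -/
def oddVar (n : ℕ) (i : Fin n) : Fin (2 * n + 1) := ⟨2 * i.1 + 1, by have := i.2; omega⟩

/-- The variable `u_{2i+2}` of `k[u₀, …, u_{2n}]`, for `i = 0, …, n-1`. -/
def evenVar (n : ℕ) (i : Fin n) : Fin (2 * n + 1) := ⟨2 * i.1 + 2, by have := i.2; omega⟩

/-- `Ā = u₀³ + Σ_{i=0}^{n-1} (u_{2i+1}³ + 3u_{2i+1}²u_{2i+2} + 3u_{2i+1}u_{2i+2}² + 9u_{2i+2}³)`. -/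
noncomputable def Abar (k : Type) [Field k] (n : ℕ) : MvPolynomial (Fin (2 * n + 1)) k :=
  X ⟨0, by omega⟩ ^ 3 + ∑ i : Fin n,
    (X (oddVar n i) ^ 3 + 3 * X (oddVar n i) ^ 2 * X (evenVar n i)
      + 3 * X (oddVar n i) * X (evenVar n i) ^ 2 + 9 * X (evenVar n i) ^ 3)

/-- `B̄ = u₀³ + Σ_{i=0}^{n-1} (u_{2i+1}³ - u_{2i+1}²u_{2i+2} + 3u_{2i+1}u_{2i+2}² - 3u_{2i+2}³)`. -/
noncomputable def Bbar (k : Type) [Field k] (n : ℕ) : MvPolynomial (Fin (2 * n + 1)) k :=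
  X ⟨0, by omega⟩ ^ 3 + ∑ i : Fin n,
    (X (oddVar n i) ^ 3 - X (oddVar n i) ^ 2 * X (evenVar n i)
      + 3 * X (oddVar n i) * X (evenVar n i) ^ 2 - 3 * X (evenVar n i) ^ 3)

/-!
With `xᵢ = u_{2i-1}`, `yᵢ = u_{2i}` and `zᵢ = xᵢ + √-3 yᵢ` for `i = 1, …, n`, the forms
`H = u₀³ + ∑ xᵢ (xᵢ² + 3yᵢ²)` and `G = ∑ yᵢ (xᵢ² + 3yᵢ²)` are `u₀³` plus the real part, and the
`√-3`-part, of `∑ zᵢ² z̄ᵢ`. Since `Ā = H + 3G` and `B̄ = H - G`, the ideal `(Ā, B̄)` is `(G, H)`.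

Let `S` be the polynomial ring in the `xᵢ`, `yᵢ` with `i ≥ 2`, put `A = S[y]` with `y = y₁`, and let
`p, q ∈ S` be the real and `√-3`-parts of `∑_{i ≥ 2} zᵢ² z̄ᵢ`. As a polynomial in `x = x₁`,
`G = y x² + (3y³ + q)`; it is primitive, and irreducible over `K = Frac A` because the prime `y`
does not divide `3y³ + q`, so that `-(3y³ + q)/y` is not a square. Hence `A[x]/(G)` embeds in
`L = K(ω)` with `ω² = -(3y³ + q)/y`, and as `H` is monic in `u₀` it suffices that
`u₀³ + (x³ + 3y²x + p)` stays irreducible at `x = ω`, i.e. that `ω³ + 3y²ω + p` is not a cube in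
`L`. Its norm from `L` to `K` times `y³` is `(p² + 3q²) y³ + q³`. If it were a cube, this would be a
cube in `S[y]`, which is impossible: a cube `(a y + b)³` with vanishing linear term and nonzero
constant term is constant.
-/

section PolynomialTower

open scoped Polynomial

theorem comap_mapRingHom_span_singleton {R S : Type*} [CommRing R] [CommRing S] (ψ : R →+* S)
    {h : R[X]} (hm : h.Monic) :
    (Ideal.span {h.map ψ}).comap (Polynomial.mapRingHom ψ) =
      (RingHom.ker ψ).map Polynomial.C ⊔ Ideal.span {h} := by
  refine le_antisymm (fun f hf ↦ ?_) (sup_le ?_ ?_)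
  · have hrem : f %ₘ h ∈ (RingHom.ker ψ).map Polynomial.C := by
      rw [← Polynomial.ker_mapRingHom, RingHom.mem_ker, Polynomial.coe_mapRingHom,
        Polynomial.map_modByMonic ψ hm, Polynomial.modByMonic_eq_zero_iff_dvd (hm.map ψ)]
      exact Ideal.mem_span_singleton.mp hf
    rw [← Polynomial.modByMonic_add_div f h]
    exact add_mem (Ideal.mem_sup_left hrem) (Ideal.mem_sup_right
      (Ideal.mul_mem_right _ _ (Ideal.mem_span_singleton_self h)))
  · rw [← Polynomial.ker_mapRingHom]
    exact Ideal.comap_mono bot_le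
  · rw [Ideal.span_singleton_le_iff_mem]
    exact Ideal.mem_span_singleton_self _

theorem ker_aeval_eq_span_of_isPrimitive {A K L : Type*} [CommRing A] [IsDomain A]
    [IsGCDMonoid A] [Field K] [Algebra A K] [IsFractionRing A K] [CommRing L]
    [Nontrivial L] [Algebra A L] [Algebra K L] [IsScalarTower A K L] {g : A[X]}
    (hg : g.IsPrimitive) (hirr : Irreducible (g.map (algebraMap A K))) {w : L}
    (hw : Polynomial.aeval w g = 0) :
    RingHom.ker (Polynomial.aeval w : A[X] →ₐ[A] L) = Ideal.span {g} := by
  ext f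
  have hwK : Polynomial.aeval w (g.map (algebraMap A K)) = 0 := by
    rwa [Polynomial.aeval_map_algebraMap]
  rw [RingHom.mem_ker, Ideal.mem_span_singleton, hg.dvd_iff_fraction_map_dvd_fraction_map K,
    ← hirr.dvd_iff_aeval_eq_zero hwK, Polynomial.aeval_map_algebraMap]

theorem isPrime_span_pair_of_irreducible_map {A K L : Type*} [CommRing A] [IsDomain A]
    [IsGCDMonoid A] [Field K] [Algebra A K] [IsFractionRing A K] [Field L]
    [Algebra A L] [Algebra K L] [IsScalarTower A K L] {g : A[X]}
    (hg : g.IsPrimitive) (hirr : Irreducible (g.map (algebraMap A K))) {w : L}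
    (hw : Polynomial.aeval w g = 0) {h : A[X][X]} (hm : h.Monic)
    (hirr_map : Irreducible (h.map (Polynomial.aeval w : A[X] →ₐ[A] L).toRingHom)) :
    (Ideal.span {Polynomial.C g, h}).IsPrime := by
  have hker : RingHom.ker (Polynomial.aeval w : A[X] →ₐ[A] L).toRingHom = Ideal.span {g} :=
    ker_aeval_eq_span_of_isPrimitive hg hirr hw
  rw [Ideal.span_insert, ← Set.image_singleton, ← Ideal.map_span, ← hker,
    ← comap_mapRingHom_span_singleton _ hm]
  have := (Ideal.span_singleton_prime hirr_map.ne_zero).mpr hirr_map.prime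
  exact Ideal.comap_isPrime _ _

theorem isPrimitive_C_mul_X_pow_add_C {A : Type*} [CommSemiring A] {a b : A} (h : IsRelPrime a b)
    {n : ℕ} (hn : n ≠ 0) :
    (Polynomial.C a * Polynomial.X ^ n + Polynomial.C b).IsPrimitive := by
  intro r hr
  rw [Polynomial.C_dvd_iff_dvd_coeff] at hr
  exact h (by simpa [Polynomial.coeff_C, hn] using hr n)
    (by simpa [Polynomial.coeff_X_pow, hn.symm] using hr 0)

theorem irreducible_C_mul_X_pow_add_C {K : Type*} [Field K] {a b : K} (ha : a ≠ 0) {l : ℕ}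
    (hl : l.Prime) (h : ∀ r : K, r ^ l ≠ -b / a) :
    Irreducible (Polynomial.C a * Polynomial.X ^ l + Polynomial.C b) := by
  have hfactor : Polynomial.C a * Polynomial.X ^ l + Polynomial.C b =
      Polynomial.C a * (Polynomial.X ^ l - Polynomial.C (-b / a)) := by
    rw [mul_sub, ← Polynomial.C_mul, mul_div_cancel₀ _ ha, Polynomial.C_neg, sub_neg_eq_add]
  rw [hfactor, irreducible_isUnit_mul (Polynomial.isUnit_C.mpr ha.isUnit)]
  exact X_pow_sub_C_irreducible_of_prime hl h

end PolynomialTower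

section Powers

open scoped Polynomial

theorem exists_pow_eq_of_pow_eq_algebraMap {A K : Type*} [CommRing A] [IsIntegrallyClosed A]
    [CommRing K] [Algebra A K] [IsFractionRing A K] {a : A} {r : K} {n : ℕ} (hn : 0 < n)
    (h : r ^ n = algebraMap A K a) : ∃ t : A, t ^ n = a := by
  obtain ⟨t, rfl⟩ :=
    IsIntegrallyClosed.exists_algebraMap_eq_of_isIntegral_pow hn (h ▸ isIntegral_algebraMap)
  exact ⟨t, IsFractionRing.injective A K (by rw [map_pow, h])⟩

theorem pow_ne_div_of_prime {A K : Type*} [CommRing A] [IsDomain A] [IsIntegrallyClosed A]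
    [Field K] [Algebra A K] [IsFractionRing A K] {π c : A} (hπ : Prime π) (hc : ¬ π ∣ c)
    {n : ℕ} (hn : 1 < n) (r : K) : r ^ n ≠ algebraMap A K c / algebraMap A K π := by
  intro hr
  obtain ⟨m, rfl⟩ : ∃ m, n = m + 1 := ⟨n - 1, by lia⟩
  have hπK : algebraMap A K π ≠ 0 :=
    (map_ne_zero_iff _ (IsFractionRing.injective A K)).mpr hπ.ne_zero
  have hpow : (algebraMap A K π * r) ^ (m + 1) = algebraMap A K (π ^ m * c) := by
    rw [mul_pow, hr, map_mul, map_pow, pow_succ]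
    field_simp
  obtain ⟨t, ht⟩ := exists_pow_eq_of_pow_eq_algebraMap m.succ_pos hpow
  have hdvd : π ∣ t ^ (m + 1) := ht ▸ (dvd_pow_self π (by lia)).mul_right c
  obtain ⟨u, rfl⟩ := hπ.dvd_of_dvd_pow hdvd
  refine hc ⟨u ^ (m + 1), mul_left_cancel₀ (pow_ne_zero m hπ.ne_zero) ?_⟩
  rw [← ht, Nat.succ_eq_add_one]
  ring

theorem pow_ne_C_mul_X_pow_add_C {S : Type*} [CommRing S] [IsDomain S] {α β : S} (hα : α ≠ 0)
    (hβ : β ≠ 0) {n : ℕ} (hn : 1 < n) (hnS : (n : S) ≠ 0) (t : S[X]) :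
    t ^ n ≠ Polynomial.C α * Polynomial.X ^ n + Polynomial.C β := by
  intro ht
  have hdeg : t.natDegree ≤ 1 := by
    have h := congrArg Polynomial.natDegree ht
    rw [Polynomial.natDegree_pow, Polynomial.natDegree_add_C,
      Polynomial.natDegree_C_mul_X_pow n α hα] at h
    exact (Nat.eq_of_mul_eq_mul_left (by lia) (h.trans (mul_one n).symm)).le
  obtain ⟨a, b, rfl⟩ := Polynomial.exists_eq_X_add_C_of_natDegree_le_one hdeg
  have hb : b ≠ 0 := by
    rintro rfl
    apply hβ
    simpa [show n ≠ 0 by lia] using (congrArg (Polynomial.eval 0) ht).symm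
  have ha : a = 0 := by
    simpa [Polynomial.derivative_pow, hb, hnS, show n - 1 ≠ 0 by lia] using
      congrArg (fun f ↦ (Polynomial.derivative f).eval 0) ht
  subst ha
  apply hα
  simpa [← map_pow, Polynomial.coeff_C, show n ≠ 0 by lia] using
    (congrArg (Polynomial.coeff · n) ht).symm

end Powers

section CubicTower

open scoped Polynomial

/-- For `q = ∑_{i ≥ 2} yᵢ (xᵢ² + 3yᵢ²)`, the `√-3`-part `∑_{i ≥ 1} yᵢ (xᵢ² + 3yᵢ²)` of the norm
form, as a polynomial in `X = x₁` over a ring containing `y = y₁` and `q`. -/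
noncomputable def imCubic {A : Type*} [CommSemiring A] (y q : A) : A[X] :=
  Polynomial.C y * Polynomial.X ^ 2 + Polynomial.C (3 * y ^ 3 + q)

/-- For `p = ∑_{i ≥ 2} xᵢ (xᵢ² + 3yᵢ²)`, the real part `∑_{i ≥ 1} xᵢ (xᵢ² + 3yᵢ²)` of the norm
form, as a polynomial in `X = x₁` over a ring containing `y = y₁` and `p`. -/
noncomputable def reCubic {A : Type*} [CommSemiring A] (y p : A) : A[X] :=
  Polynomial.X ^ 3 + Polynomial.C (3 * y ^ 2) * Polynomial.X + Polynomial.C p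

theorem isPrimitive_imCubic {A : Type*} [CommRing A] [IsDomain A] {y q : A} (hy : Prime y)
    (hq : ¬ y ∣ q) : (imCubic y q).IsPrimitive := by
  refine isPrimitive_C_mul_X_pow_add_C (hy.irreducible.isRelPrime_iff_not_dvd.mpr ?_) two_ne_zero
  rwa [dvd_add_right (Dvd.intro_left (3 * y ^ 2) (by ring))]

theorem sq_ne_neg_div_of_prime {A K : Type*} [CommRing A] [IsDomain A] [IsIntegrallyClosed A]
    [Field K] [Algebra A K] [IsFractionRing A K] {y q : A} (hy : Prime y) (hq : ¬ y ∣ q) (r : K) :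
    r ^ 2 ≠ -algebraMap A K (3 * y ^ 3 + q) / algebraMap A K y := by
  rw [← map_neg]
  refine pow_ne_div_of_prime hy ?_ one_lt_two r
  rwa [dvd_neg, dvd_add_right (Dvd.intro_left (3 * y ^ 2) (by ring))]

section QuadraticExtension

variable {A K : Type*} [CommRing A] [CommRing K] [Algebra A K] {y q : A} {δ : K}

theorem aeval_omega_imCubic (hδ : algebraMap A K y * δ = -algebraMap A K (3 * y ^ 3 + q)) :
    Polynomial.aeval (.omega : QuadraticAlgebra K δ 0) (imCubic y q) = 0 := by
  have hscalar : Polynomial.aeval (.omega : QuadraticAlgebra K δ 0) (imCubic y q) =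
      algebraMap K _ (algebraMap A K y * δ + algebraMap A K (3 * y ^ 3 + q)) := by
    simp only [imCubic, map_add, map_mul, map_pow, Polynomial.aeval_C, Polynomial.aeval_X, sq,
      QuadraticAlgebra.omega_mul_omega_eq_algebraMap, map_zero, zero_mul, add_zero,
      ← IsScalarTower.algebraMap_apply]
  rw [hscalar, hδ, neg_add_cancel, map_zero]

theorem norm_aeval_omega_reCubic (hδ : algebraMap A K y * δ = -algebraMap A K (3 * y ^ 3 + q))
    (p : A) :
    algebraMap A K y ^ 3 *
        QuadraticAlgebra.norm (Polynomial.aeval (.omega : QuadraticAlgebra K δ 0) (reCubic y p)) =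
      algebraMap A K ((p ^ 2 + 3 * q ^ 2) * y ^ 3 + q ^ 3) := by
  have heval : Polynomial.aeval (.omega : QuadraticAlgebra K δ 0) (reCubic y p) =
      ⟨algebraMap A K p, δ + 3 * algebraMap A K y ^ 2⟩ := by
    simp only [reCubic, map_add, map_mul, map_pow, map_ofNat, Polynomial.aeval_X,
      Polynomial.aeval_C, IsScalarTower.algebraMap_apply A K (QuadraticAlgebra K δ 0)]
    ext <;> simp [pow_succ, QuadraticAlgebra.re_ofNat, QuadraticAlgebra.im_ofNat]
  rw [heval, QuadraticAlgebra.norm_def]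
  simp only [map_add, map_mul, map_pow, map_ofNat] at hδ ⊢
  have hq : algebraMap A K q = -(algebraMap A K y * δ) - 3 * algebraMap A K y ^ 3 := by
    linear_combination hδ
  rw [hq]
  ring

end QuadraticExtension

theorem isPrime_span_imCubic_reCubic {A : Type*} [CommRing A] [IsDomain A]
    [IsGCDMonoid A] {y p q : A} (hy : Prime y) (hq : ¬ y ∣ q)
    (hcube : ∀ t : A, t ^ 3 ≠ (p ^ 2 + 3 * q ^ 2) * y ^ 3 + q ^ 3) :
    (Ideal.span {Polynomial.C (imCubic y q),
      Polynomial.X ^ 3 + Polynomial.C (reCubic y p)}).IsPrime := by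
  let K := FractionRing A
  let δ : K := -algebraMap A K (3 * y ^ 3 + q) / algebraMap A K y
  have hyK : algebraMap A K y ≠ 0 :=
    (map_ne_zero_iff _ (IsFractionRing.injective A K)).mpr hy.ne_zero
  have hδ : algebraMap A K y * δ = -algebraMap A K (3 * y ^ 3 + q) := mul_div_cancel₀ _ hyK
  have hδ_sq (r : K) : r ^ 2 ≠ δ := sq_ne_neg_div_of_prime hy hq r
  have : Fact (∀ r : K, r ^ 2 ≠ δ + 0 * r) := ⟨by simpa using hδ_sq⟩
  let w : QuadraticAlgebra K δ 0 := .omega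
  have hirr : Irreducible ((imCubic y q).map (algebraMap A K)) := by
    simpa [imCubic] using irreducible_C_mul_X_pow_add_C hyK Nat.prime_two hδ_sq
  refine isPrime_span_pair_of_irreducible_map (isPrimitive_imCubic hy hq) hirr
    (aeval_omega_imCubic hδ) (Polynomial.monic_X_pow_add_C _ three_ne_zero) ?_
  have hcubeL (r : QuadraticAlgebra K δ 0) :
      r ^ 3 ≠ -Polynomial.aeval w (reCubic y p) / 1 := by
    intro hr
    have hnorm : (algebraMap A K y * r.norm) ^ 3 =
        algebraMap A K ((p ^ 2 + 3 * q ^ 2) * y ^ 3 + q ^ 3) := by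
      rw [mul_pow, ← map_pow QuadraticAlgebra.norm, hr, div_one, QuadraticAlgebra.norm_neg,
        norm_aeval_omega_reCubic hδ p]
    obtain ⟨t, ht⟩ := exists_pow_eq_of_pow_eq_algebraMap three_pos hnorm
    exact hcube t ht
  simpa using irreducible_C_mul_X_pow_add_C one_ne_zero Nat.prime_three hcubeL

theorem isPrime_span_imCubic_X_reCubic_X {S : Type*} [CommRing S] [IsDomain S] [IsGCDMonoid S]
    (h3 : (3 : S) ≠ 0) {p q : S} (hq : q ≠ 0) (hpq : p ^ 2 + 3 * q ^ 2 ≠ 0) :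
    (Ideal.span {Polynomial.C (imCubic Polynomial.X (Polynomial.C q)),
      Polynomial.X ^ 3 + Polynomial.C (reCubic Polynomial.X (Polynomial.C p))}).IsPrime := by
  refine isPrime_span_imCubic_reCubic Polynomial.prime_X ?_ fun t ↦ ?_
  · rwa [Polynomial.X_dvd_iff, Polynomial.coeff_C_zero]
  · simpa [map_ofNat] using pow_ne_C_mul_X_pow_add_C hpq (pow_ne_zero 3 hq) (n := 3) (by lia)
      (by exact_mod_cast h3) t

end CubicTower

section NormForms

/-- `∑ wᵢ (xᵢ² + 3yᵢ²)`. For `zᵢ = xᵢ + √-3 yᵢ`, the choices `w = x` and `w = y` give the real part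
and the coefficient of `√-3` of `∑ zᵢ² z̄ᵢ`. -/
def weightedNormSum {ι R : Type*} [Fintype ι] [CommSemiring R] (w x y : ι → R) : R :=
  ∑ i, w i * (x i ^ 2 + 3 * y i ^ 2)

theorem map_weightedNormSum {ι R S F : Type*} [Fintype ι] [CommSemiring R] [CommSemiring S]
    [FunLike F R S] [RingHomClass F R S] (f : F) (w x y : ι → R) :
    f (weightedNormSum w x y) =
      weightedNormSum (fun i ↦ f (w i)) (fun i ↦ f (x i)) (fun i ↦ f (y i)) := by
  simp only [weightedNormSum, map_sum, map_mul, map_add, map_pow, map_ofNat]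

theorem weightedNormSum_succ {R : Type*} [CommSemiring R] {m : ℕ} (w x y : Fin (m + 1) → R) :
    weightedNormSum w x y = w 0 * (x 0 ^ 2 + 3 * y 0 ^ 2) +
      weightedNormSum (fun i : Fin m ↦ w i.succ) (fun i ↦ x i.succ) (fun i ↦ y i.succ) :=
  Fin.sum_univ_succ _

variable {ι σ : Type*} [Fintype ι] (k : Type*) [CommSemiring k] (a b : ι → σ)

/-- The cubic form `∑ xᵢ (xᵢ² + 3yᵢ²)` in the variables `xᵢ = X (a i)` and `yᵢ = X (b i)`. -/
noncomputable def normRe : MvPolynomial σ k :=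
  weightedNormSum (fun i ↦ X (a i)) (fun i ↦ X (a i)) fun i ↦ X (b i)

/-- The cubic form `∑ yᵢ (xᵢ² + 3yᵢ²)` in the variables `xᵢ = X (a i)` and `yᵢ = X (b i)`. -/
noncomputable def normIm : MvPolynomial σ k :=
  weightedNormSum (fun i ↦ X (b i)) (fun i ↦ X (a i)) fun i ↦ X (b i)

variable {k a b}

theorem eval_normRe (v : σ → k) :
    eval v (normRe k a b) = weightedNormSum (v ∘ a) (v ∘ a) (v ∘ b) := by
  simp only [normRe, map_weightedNormSum, eval_X, Function.comp_def]

theorem eval_normIm (v : σ → k) :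
    eval v (normIm k a b) = weightedNormSum (v ∘ b) (v ∘ a) (v ∘ b) := by
  simp only [normIm, map_weightedNormSum, eval_X, Function.comp_def]

theorem normIm_ne_zero [Nonempty ι] (h3 : (3 : k) ≠ 0) (hb : b.Injective)
    (hab : ∀ i j, a i ≠ b j) : normIm k a b ≠ 0 := by
  classical
  obtain ⟨i⟩ := ‹Nonempty ι›
  intro h
  have hb_single : Pi.single (b i) (1 : k) ∘ b = Pi.single i 1 :=
    Function.update_comp_eq_of_injective (fun _ ↦ 0) hb i 1
  have ha_single : Pi.single (b i) (1 : k) ∘ a = 0 :=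
    Function.update_comp_eq_of_forall_ne (fun _ ↦ 0) 1 fun j ↦ hab j i
  have heval := eval_normIm (k := k) (a := a) (b := b) (Pi.single (b i) 1)
  rw [h, map_zero, hb_single, ha_single] at heval
  simp [weightedNormSum, Pi.single_apply, ite_pow, h3.symm] at heval

theorem normRe_sq_add_three_mul_normIm_sq_ne_zero [Nonempty ι] [Nontrivial k] (ha : a.Injective)
    (hab : ∀ i j, a i ≠ b j) : normRe k a b ^ 2 + 3 * normIm k a b ^ 2 ≠ 0 := by
  classical
  obtain ⟨i⟩ := ‹Nonempty ι›
  intro h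
  have ha_single : Pi.single (a i) (1 : k) ∘ a = Pi.single i 1 :=
    Function.update_comp_eq_of_injective (fun _ ↦ 0) ha i 1
  have hb_single : Pi.single (a i) (1 : k) ∘ b = 0 :=
    Function.update_comp_eq_of_forall_ne (fun _ ↦ 0) 1 fun j ↦ (hab i j).symm
  have heval := congrArg (eval (Pi.single (a i) (1 : k))) h
  simp only [map_add, map_mul, map_pow, eval_normRe, eval_normIm, ha_single, hb_single,
    map_zero] at heval
  simp [weightedNormSum, Pi.single_apply, ite_pow] at heval

end NormForms

section SplitVars

open scoped Polynomial

variable (k : Type*) [CommSemiring k] (m : ℕ)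

/-- `k[u₀, …, u_{m+2}]` as `k[u₃, …, u_{m+2}][u₂][u₁][u₀]`: the three outer variables, from the
outside in, are `u₀`, `u₁`, `u₂`, and the remaining ones are renumbered from `0`. -/
noncomputable def splitVars :
    MvPolynomial (Fin (m + 3)) k ≃ₐ[k] (MvPolynomial (Fin m) k)[X][X][X] :=
  (finSuccEquiv k (m + 2)).trans (Polynomial.mapAlgEquiv
    ((finSuccEquiv k (m + 1)).trans (Polynomial.mapAlgEquiv (finSuccEquiv k m))))

theorem splitVars_X_zero : splitVars k m (X 0) = Polynomial.X := by
  simp [splitVars, finSuccEquiv_X_zero]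

theorem splitVars_X_one : splitVars k m (X 1) = Polynomial.C Polynomial.X := by
  change splitVars k m (X (Fin.succ 0)) = _
  simp only [splitVars, AlgEquiv.trans_apply, finSuccEquiv_X_succ]
  simp [finSuccEquiv_X_zero]

theorem splitVars_X_two : splitVars k m (X 2) = Polynomial.C (Polynomial.C Polynomial.X) := by
  change splitVars k m (X (Fin.succ (Fin.succ 0))) = _
  simp only [splitVars, AlgEquiv.trans_apply, finSuccEquiv_X_succ, Polynomial.coe_mapAlgEquiv,
    Polynomial.map_C, RingHom.coe_coe]
  simp [finSuccEquiv_X_zero]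

theorem splitVars_X_succ_succ_succ (j : Fin m) : splitVars k m (X j.succ.succ.succ) =
    Polynomial.C (Polynomial.C (Polynomial.C (X j))) := by
  simp [splitVars, finSuccEquiv_X_succ]

variable {m}

/-- The index of `u_{2i+3}` among the variables `u₃, …, u_{2m+2}` that `splitVars k (2 * m)` leaves
in the coefficients. -/
def tailOdd (i : Fin m) : Fin (2 * m) := ⟨2 * i, by lia⟩

/-- The index of `u_{2i+4}` among the variables `u₃, …, u_{2m+2}` that `splitVars k (2 * m)` leaves
in the coefficients. -/
def tailEven (i : Fin m) : Fin (2 * m) := ⟨2 * i + 1, by lia⟩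

theorem tailOdd_injective : (tailOdd (m := m)).Injective := fun i j h ↦ by
  simpa [tailOdd, Fin.ext_iff] using h

theorem tailEven_injective : (tailEven (m := m)).Injective := fun i j h ↦ by
  simpa [tailEven, Fin.ext_iff] using h

theorem tailOdd_ne_tailEven (i j : Fin m) : tailOdd i ≠ tailEven j := by
  simp only [tailEven, tailOdd, ne_eq, Fin.mk.injEq]
  lia

theorem oddVar_succ (i : Fin m) : oddVar (m + 1) i.succ = (tailOdd i).succ.succ.succ := by
  ext
  simp [oddVar, tailOdd, mul_add]

theorem evenVar_succ (i : Fin m) : evenVar (m + 1) i.succ = (tailEven i).succ.succ.succ := by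
  ext
  simp [evenVar, tailEven, mul_add]

theorem oddVar_zero : oddVar (m + 1) 0 = (1 : Fin (2 * m + 3)) := rfl

theorem evenVar_zero : evenVar (m + 1) 0 = (2 : Fin (2 * m + 3)) := rfl

set_option maxSynthPendingDepth 4 in
theorem splitVars_normRe : splitVars k (2 * m) (normRe k (oddVar (m + 1)) (evenVar (m + 1))) =
    Polynomial.C (reCubic Polynomial.X (Polynomial.C (normRe k tailOdd tailEven))) := by
  rw [normRe, map_weightedNormSum]
  simp only [weightedNormSum_succ, oddVar_zero, evenVar_zero, oddVar_succ, evenVar_succ,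
    splitVars_X_one, splitVars_X_two, splitVars_X_succ_succ_succ, reCubic, normRe,
    map_weightedNormSum, map_add, map_mul, map_pow, map_ofNat]
  ring

set_option maxSynthPendingDepth 4 in
theorem splitVars_normIm : splitVars k (2 * m) (normIm k (oddVar (m + 1)) (evenVar (m + 1))) =
    Polynomial.C (imCubic Polynomial.X (Polynomial.C (normIm k tailOdd tailEven))) := by
  rw [normIm, map_weightedNormSum]
  simp only [weightedNormSum_succ, oddVar_zero, evenVar_zero, oddVar_succ, evenVar_succ,
    splitVars_X_one, splitVars_X_two, splitVars_X_succ_succ_succ, imCubic, normIm,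
    map_weightedNormSum, map_add, map_mul, map_pow, map_ofNat]
  ring

end SplitVars

section FermatForms

theorem Abar_eq (k : Type) [Field k] (n : ℕ) : Abar k n =
    X 0 ^ 3 + normRe k (oddVar n) (evenVar n) + 3 * normIm k (oddVar n) (evenVar n) := by
  rw [add_assoc, Abar, normRe, normIm, weightedNormSum, weightedNormSum, Finset.mul_sum,
    ← Finset.sum_add_distrib]
  refine congrArg _ (Finset.sum_congr rfl fun i _ ↦ ?_)
  ring

theorem Bbar_eq (k : Type) [Field k] (n : ℕ) : Bbar k n =
    X 0 ^ 3 + normRe k (oddVar n) (evenVar n) - normIm k (oddVar n) (evenVar n) := by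
  rw [add_sub_assoc, Bbar, normRe, normIm, weightedNormSum, weightedNormSum,
    ← Finset.sum_sub_distrib]
  refine congrArg _ (Finset.sum_congr rfl fun i _ ↦ ?_)
  ring

theorem span_pair_add_mul_sub {R : Type*} [CommRing R] {c : R} (hc : IsUnit (c + 1)) (g h : R) :
    Ideal.span {h + c * g, h - g} = Ideal.span {g, h} := by
  calc
    Ideal.span {h + c * g, h - g} = Ideal.span {(c + 1) * g + (h - g), h - g} := by ring_nf
    _ = Ideal.span {(c + 1) * g, h - g} := Ideal.span_pair_add_right _ _
    _ = Ideal.span {g, h - g} := by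
      rw [Ideal.span_insert, Ideal.span_singleton_mul_left_unit hc, ← Ideal.span_insert]
    _ = Ideal.span {g, h} := Ideal.span_pair_sub_left _ _

theorem isPrime_span_pair_of_ringEquiv {R S F : Type*} [CommRing R] [CommRing S]
    [EquivLike F R S] [RingEquivClass F R S] (e : F) {a b : R}
    (h : (Ideal.span {e a, e b}).IsPrime) : (Ideal.span {a, b}).IsPrime := by
  rw [← Ideal.comap_map_of_bijective e (EquivLike.bijective e) (I := Ideal.span {a, b}),
    Ideal.map_span, Set.image_pair]
  exact Ideal.comap_isPrime _ _

set_option maxSynthPendingDepth 4 in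
theorem isPrime_span_normIm_normRe {k : Type*} [CommRing k] [IsDomain k]
    [UniqueFactorizationMonoid k] (h3 : (3 : k) ≠ 0) (m : ℕ) [NeZero m] :
    (Ideal.span {normIm k (oddVar (m + 1)) (evenVar (m + 1)),
      X 0 ^ 3 + normRe k (oddVar (m + 1)) (evenVar (m + 1))}).IsPrime := by
  have h3C : (3 : MvPolynomial (Fin (2 * m)) k) ≠ 0 := by
    rw [← map_ofNat C 3]
    exact C_ne_zero.mpr h3
  have hX : splitVars k (2 * m) (X 0) = Polynomial.X := splitVars_X_zero k (2 * m)
  refine isPrime_span_pair_of_ringEquiv (splitVars k (2 * m)) ?_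
  simpa [splitVars_normIm, splitVars_normRe, hX] using
    isPrime_span_imCubic_X_reCubic_X h3C
      (normIm_ne_zero h3 tailEven_injective tailOdd_ne_tailEven)
      (normRe_sq_add_three_mul_normIm_sq_ne_zero tailOdd_injective tailOdd_ne_tailEven)

end FermatForms

theorem fermat_complete_intersection_irreducible_general (k : Type) [Field k] (h2 : (2 : k) ≠ 0)
    (h3 : (3 : k) ≠ 0) (n : ℕ) (hn : 2 ≤ n) : (Ideal.span {Abar k n, Bbar k n}).IsPrime := by
  obtain ⟨m, rfl⟩ : ∃ m, n = m + 1 := ⟨n - 1, by lia⟩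
  have : NeZero m := ⟨by lia⟩
  have h4 : (3 + 1 : k) ≠ 0 := by
    convert mul_ne_zero h2 h2 using 1
    norm_num
  have h4C : IsUnit (3 + 1 : MvPolynomial (Fin (2 * (m + 1) + 1)) k) := by
    simpa only [map_add, map_ofNat, map_one] using
      h4.isUnit.map (C (σ := Fin (2 * (m + 1) + 1)))
  rw [Abar_eq, Bbar_eq, span_pair_add_mul_sub h4C]
  exact isPrime_span_normIm_normRe h3 m

/-- For `n ≥ 2` (over a field of characteristic zero), the complete
intersection `Y^{2n-2} = {Ā = B̄ = 0} ⊂ P^{2n}` is irreducible; algebraically, the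
radical of the ideal `(Ā, B̄)` of `k[u₀, …, u_{2n}]` is prime. -/
theorem fermat_complete_intersection_irreducible (k : Type) [Field k] [CharZero k]
    (n : ℕ) (hn : 2 ≤ n) :
    (Ideal.span {Abar k n, Bbar k n}).radical.IsPrime := by
  have hprime :=
    fermat_complete_intersection_irreducible_general k two_ne_zero three_ne_zero n hn
  rwa [hprime.radical]
end
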